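/- arXiv:2103.10598 — 4 statements merged into one kernel-verified Lean document; each statement's English description precedes it below -/
import Mathlib

section
/- Let G be a finite group. Then λ(G) = |G| − 2 if and only if G is isomorphic to C_3 or S_3, where λ(G) is the number of maximal cyclic subgroups. -/
/-- A subgroup is maximal cyclic if it is cyclic and not properly contained
in any cyclic subgroup. -/
def IsMaximalCyclic {G : Type*} [Group G] (H : Subgroup G) : Prop :=
  IsCyclic H ∧ ∀ K : Subgroup G, IsCyclic K → H ≤ K → H = K

/-- `lambdaCover G` is the number of maximal cyclic subgroups of `G`. -/
noncomputable def lambdaCover (G : Type*) [Group G] : ℕ :=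
  Nat.card {H : Subgroup G // IsMaximalCyclic H}

/-!
Choose one generator for each maximal cyclic subgroup. When `|G| = λ(G) + 2`, the chosen generators
are all elements of `G` but `1` and one further `v`. If `y` and `y⁻¹` are both chosen, they are
equal, so every element other than `v` and `v⁻¹` squares to `1`; maximality then forces `v` to have
order 3. In such a group `⟨v⟩` is its own centralizer and every element outside it is an involution
inverting `v`, so `⟨v⟩` has index at most 2. If the index is 1 then `G` is `C₃`; if it is 2, then
`G` has order 6 and acts faithfully on the three cosets of an involution.
-/

open Subgroup

section GroupLemmas

variable {G : Type*} [Group G] {g y : G}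

theorem eq_of_mem_zpowers_of_sq_eq_one (hg : g ^ 2 = 1) (hy : y ∈ zpowers g) (hy1 : y ≠ 1) :
    y = g := by
  obtain ⟨k, rfl⟩ := mem_zpowers_iff.1 hy
  have hg' : g ^ (2 : ℤ) = 1 := mod_cast hg
  rcases Int.even_or_odd' k with ⟨m, rfl | rfl⟩
  · exact absurd (by rw [zpow_mul, hg', one_zpow]) hy1
  · rw [zpow_add, zpow_mul, hg', one_zpow, one_mul, zpow_one]

theorem nonempty_mulEquiv_perm_of_normalCore_eq_bot {H : Subgroup G} (hcore : H.normalCore = ⊥)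
    (hcard : Nat.card G = H.index.factorial) : Nonempty (G ≃* Equiv.Perm (Fin H.index)) := by
  have : Finite G := Nat.finite_of_card_ne_zero (hcard ▸ H.index.factorial_ne_zero)
  let cosetAction := MulAction.toPermHom G (G ⧸ H)
  have injective_cosetAction : Function.Injective cosetAction := by
    rw [← MonoidHom.ker_eq_bot_iff, ← normalCore_eq_ker, hcore]
  have bijective_cosetAction : Function.Bijective cosetAction :=
    (Nat.bijective_iff_injective_and_card _).2
      ⟨injective_cosetAction, by rw [hcard, Nat.card_perm, index_eq_card]⟩
  exact ⟨(MulEquiv.ofBijective cosetAction bijective_cosetAction).trans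
    (Finite.equivFinOfCardEq H.index_eq_card.symm).permCongrHom⟩

end GroupLemmas

namespace IsMaximalCyclic

variable {G : Type*} [Group G] {H : Subgroup G} {g y : G}

theorem exists_zpowers_eq (hH : IsMaximalCyclic H) : ∃ g : G, zpowers g = H :=
  H.isCyclic_iff_exists_zpowers_eq_top.1 hH.1

theorem zpowers_eq_of_mem (hg : IsMaximalCyclic (zpowers g)) (hgy : g ∈ zpowers y) :
    zpowers g = zpowers y :=
  hg.2 _ inferInstance (zpowers_le.2 hgy)

theorem ne_one [Nontrivial G] (hg : IsMaximalCyclic (zpowers g)) : g ≠ 1 := by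
  rintro rfl
  obtain ⟨y, hy⟩ := exists_ne (1 : G)
  have hbot : zpowers (1 : G) = zpowers y := hg.zpowers_eq_of_mem (one_mem _)
  exact hy (zpowers_eq_bot.1 (hbot.symm.trans zpowers_one_eq_bot))

theorem zpowers_of_forall_prime_orderOf (hG : ∀ y : G, y ≠ 1 → (orderOf y).Prime) (hg : g ≠ 1) :
    IsMaximalCyclic (zpowers g) := by
  refine ⟨inferInstance, fun K hK hle => ?_⟩
  obtain ⟨y, rfl⟩ := K.isCyclic_iff_exists_zpowers_eq_top.1 hK
  have hy : y ≠ 1 := by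
    rintro rfl
    rw [zpowers_one_eq_bot, le_bot_iff, zpowers_eq_bot] at hle
    exact hg hle
  have : Finite (zpowers y) := Nat.finite_of_card_ne_zero (Nat.card_zpowers y ▸ (hG y hy).ne_zero)
  have hdvd : orderOf g ∣ orderOf y := orderOf_dvd_of_mem_zpowers (zpowers_le.1 hle)
  apply eq_of_le_of_card_ge hle
  rw [Nat.card_zpowers, Nat.card_zpowers, (Nat.prime_dvd_prime_iff_eq (hG g hg) (hG y hy)).1 hdvd]

end IsMaximalCyclic

/-- `S` consists of exactly one generator of each maximal cyclic subgroup. -/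
def IsGeneratorTransversal {G : Type*} [Group G] (S : Set G) : Prop :=
  Set.BijOn zpowers S {H | IsMaximalCyclic H}

/-- `x` has order 3 and is, up to inversion, the only element of the group that does not square to
`1`. The groups containing such an element are exactly `C₃` and `S₃`. -/
structure IsUniqueNonInvolution {G : Type*} [Group G] (x : G) : Prop where
  orderOf_eq : orderOf x = 3
  sq_eq_one_or (y : G) : y ^ 2 = 1 ∨ y = x ∨ y = x⁻¹

theorem exists_isGeneratorTransversal (G : Type*) [Group G] :
    ∃ S : Set G, IsGeneratorTransversal S := by
  have hsurj : Set.SurjOn zpowers (zpowers ⁻¹' {H : Subgroup G | IsMaximalCyclic H})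
      {H | IsMaximalCyclic H} := by
    intro H hH
    obtain ⟨g, rfl⟩ := IsMaximalCyclic.exists_zpowers_eq hH
    exact ⟨g, hH, rfl⟩
  obtain ⟨S, -, hS⟩ := hsurj.exists_bijOn_subset
  exact ⟨S, hS⟩

namespace IsGeneratorTransversal

variable {G : Type*} [Group G] {S : Set G} {g v : G}

theorem lambdaCover_add_ncard_compl [Finite G] (hS : IsGeneratorTransversal S) :
    lambdaCover G + Sᶜ.ncard = Nat.card G := by
  have hcard : S.ncard = lambdaCover G := Set.BijOn.ncard_eq hS
  rw [← hcard, Set.ncard_add_ncard_compl]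

theorem one_notMem [Nontrivial G] (hS : IsGeneratorTransversal S) : 1 ∉ S :=
  fun h => (hS.mapsTo h).ne_one rfl

theorem sq_eq_one_of_inv_mem (hS : IsGeneratorTransversal S) (hg : g ∈ S) (hg' : g⁻¹ ∈ S) :
    g ^ 2 = 1 := by
  have hinv : g⁻¹ = g := hS.injOn hg' hg zpowers_inv
  rw [sq, ← inv_eq_iff_mul_eq_one, hinv]

theorem mem_of_forall_sq_eq_one (hS : IsGeneratorTransversal S) (hG : ∀ y : G, y ^ 2 = 1)
    (hg : g ≠ 1) : g ∈ S := by
  have hmax : IsMaximalCyclic (zpowers g) :=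
    .zpowers_of_forall_prime_orderOf
      (fun y hy => orderOf_eq_prime (hG y) hy ▸ Nat.prime_two) hg
  obtain ⟨s, hs, hsg⟩ := hS.surjOn hmax
  rwa [eq_of_mem_zpowers_of_sq_eq_one (hG s) (hsg ▸ mem_zpowers g) hg]

theorem sq_eq_one_or_eq_or_eq_inv (hS : IsGeneratorTransversal ({1, v}ᶜ : Set G)) (y : G) :
    y ^ 2 = 1 ∨ y = v ∨ y = v⁻¹ := by
  by_contra! hy
  obtain ⟨hy2, hyv, hyv'⟩ := hy
  have hy1 : y ≠ 1 := fun h => hy2 (by rw [h, one_pow])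
  refine hy2 (hS.sq_eq_one_of_inv_mem (by simp [hy1, hyv]) ?_)
  simp [hy1, inv_eq_iff_eq_inv, hyv']

theorem sq_ne_one (hS : IsGeneratorTransversal ({1, v}ᶜ : Set G)) (hv : v ≠ 1) : v ^ 2 ≠ 1 := by
  intro hv2
  have hG (y : G) : y ^ 2 = 1 := by
    rcases hS.sq_eq_one_or_eq_or_eq_inv y with h | rfl | rfl
    · exact h
    · exact hv2
    · rw [inv_pow, hv2, inv_one]
  exact hS.mem_of_forall_sq_eq_one hG hv (by simp)

theorem isUniqueNonInvolution (hS : IsGeneratorTransversal ({1, v}ᶜ : Set G)) (hv : v ≠ 1) :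
    IsUniqueNonInvolution v := by
  refine ⟨orderOf_eq_prime ?_ hv, hS.sq_eq_one_or_eq_or_eq_inv⟩
  have hvv : v ^ 2 ≠ v := by simpa [sq] using hv
  rcases hS.sq_eq_one_or_eq_or_eq_inv (v ^ 2) with hsq | h | h
  · have hmax : IsMaximalCyclic (zpowers (v ^ 2)) :=
      hS.mapsTo (by simp [hS.sq_ne_one hv, hvv])
    have hv_mem : v ∈ zpowers (v ^ 2) :=
      hmax.zpowers_eq_of_mem (npow_mem_zpowers v 2) ▸ mem_zpowers v
    exact absurd (eq_of_mem_zpowers_of_sq_eq_one hsq hv_mem hv).symm hvv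
  · exact absurd h hvv
  · rw [pow_succ, h, inv_mul_cancel]

end IsGeneratorTransversal

theorem card_eq_lambdaCover_add_two_iff_exists_isGeneratorTransversal
    {G : Type*} [Group G] [Finite G] :
    Nat.card G = lambdaCover G + 2 ↔ ∃ v : G, v ≠ 1 ∧ IsGeneratorTransversal ({1, v}ᶜ : Set G) := by
  constructor
  · intro h
    have : Nontrivial G := Finite.one_lt_card_iff_nontrivial.1 (by lia)
    obtain ⟨S, hS⟩ := exists_isGeneratorTransversal G
    have hcompl : Sᶜ.ncard = 2 := by
      have := hS.lambdaCover_add_ncard_compl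
      lia
    have hone : (1 : G) ∈ Sᶜ := hS.one_notMem
    obtain ⟨v, hv⟩ : ∃ v, Sᶜ \ {1} = {v} := by
      rw [← Set.ncard_eq_one, Set.ncard_sdiff_singleton_of_mem hone, hcompl]
    have hv1 : v ≠ 1 := (hv.ge rfl).2
    refine ⟨v, hv1, ?_⟩
    rwa [← hv, Set.insert_sdiff_self_of_mem hone, compl_compl]
  · rintro ⟨v, hv, hS⟩
    rw [← hS.lambdaCover_add_ncard_compl, compl_compl, Set.ncard_pair hv.symm]

namespace IsUniqueNonInvolution

variable {G : Type*} [Group G] {x a b y : G}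

theorem ne_one (hx : IsUniqueNonInvolution x) : x ≠ 1 := by
  rintro rfl
  simpa using hx.orderOf_eq

theorem sq_ne_one (hx : IsUniqueNonInvolution x) : x ^ 2 ≠ 1 :=
  pow_ne_one_of_lt_orderOf two_ne_zero (by rw [hx.orderOf_eq]; norm_num)

theorem inv_ne_self (hx : IsUniqueNonInvolution x) : x⁻¹ ≠ x := fun h =>
  hx.sq_ne_one (by rw [sq, ← inv_eq_iff_mul_eq_one, h])

theorem prime_orderOf (hx : IsUniqueNonInvolution x) (hy : y ≠ 1) : (orderOf y).Prime := by
  rcases hx.sq_eq_one_or y with h | rfl | rfl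
  · exact orderOf_eq_prime h hy ▸ Nat.prime_two
  · exact hx.orderOf_eq ▸ Nat.prime_three
  · rw [orderOf_inv, hx.orderOf_eq]
    exact Nat.prime_three

theorem injOn_zpowers (hx : IsUniqueNonInvolution x) :
    Set.InjOn zpowers ({1, x}ᶜ : Set G) := by
  intro y hy z hz hyz
  simp only [Set.mem_compl_iff, Set.mem_insert_iff, Set.mem_singleton_iff, not_or] at hy hz
  rcases hx.sq_eq_one_or y with hy2 | hyx
  · exact (eq_of_mem_zpowers_of_sq_eq_one hy2 (hyz ▸ mem_zpowers z) hz.1).symm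
  rcases hx.sq_eq_one_or z with hz2 | hzx
  · exact eq_of_mem_zpowers_of_sq_eq_one hz2 (hyz ▸ mem_zpowers y) hy.1
  rw [hyx.resolve_left hy.2, hzx.resolve_left hz.2]

theorem isGeneratorTransversal (hx : IsUniqueNonInvolution x) :
    IsGeneratorTransversal ({1, x}ᶜ : Set G) := by
  have : Nontrivial G := nontrivial_of_ne x 1 hx.ne_one
  refine ⟨fun y hy => ?_, hx.injOn_zpowers, fun H hH => ?_⟩
  · exact .zpowers_of_forall_prime_orderOf (fun _ => hx.prime_orderOf) fun h => hy (.inl h)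
  · obtain ⟨y, rfl⟩ := IsMaximalCyclic.exists_zpowers_eq hH
    have hy1 : y ≠ 1 := hH.ne_one
    by_cases hyx : y = x
    · exact ⟨x⁻¹, by simp [hx.ne_one, hx.inv_ne_self], by rw [zpowers_inv, hyx]⟩
    · exact ⟨y, by simp [hy1, hyx], rfl⟩

theorem mem_zpowers_of_sq_ne_one (hx : IsUniqueNonInvolution x) (hy : y ^ 2 ≠ 1) :
    y ∈ zpowers x := by
  rcases (hx.sq_eq_one_or y).resolve_left hy with rfl | rfl
  · exact mem_zpowers y
  · exact inv_mem (mem_zpowers x)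

theorem mem_zpowers_of_commute (hx : IsUniqueNonInvolution x) (hb : Commute b x) :
    b ∈ zpowers x := by
  by_cases hb2 : b ^ 2 = 1
  · have hbx : (b * x) ^ 2 ≠ 1 := by
      rw [hb.mul_pow, hb2, one_mul]
      exact hx.sq_ne_one
    exact (mul_mem_cancel_right (mem_zpowers x)).1 (hx.mem_zpowers_of_sq_ne_one hbx)
  · exact hx.mem_zpowers_of_sq_ne_one hb2

theorem conj_eq_inv_of_notMem (hx : IsUniqueNonInvolution x) (hb : b ∉ zpowers x) :
    b * x * b⁻¹ = x⁻¹ := by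
  rcases hx.sq_eq_one_or (b * x * b⁻¹) with h | h | h
  · rw [conj_pow, conj_eq_one_iff] at h
    exact absurd h hx.sq_ne_one
  · exact absurd (hx.mem_zpowers_of_commute (mul_inv_eq_iff_eq_mul.1 h)) hb
  · exact h

theorem index_zpowers_eq_two_of_notMem (hx : IsUniqueNonInvolution x) (ha : a ∉ zpowers x) :
    (zpowers x).index = 2 := by
  refine index_eq_two_iff_exists_notMem_and.2 ⟨a, ha, fun b => ?_⟩
  by_cases hb : b ∈ zpowers x
  · exact .inr hb
  · have hconj : b * a * x * (b * a)⁻¹ = x :=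
      calc b * a * x * (b * a)⁻¹ = b * (a * x * a⁻¹) * b⁻¹ := by group
        _ = (b * x * b⁻¹)⁻¹ := by rw [hx.conj_eq_inv_of_notMem ha, conj_inv]
        _ = x := by rw [hx.conj_eq_inv_of_notMem hb, inv_inv]
    exact .inl (hx.mem_zpowers_of_commute (mul_inv_eq_iff_eq_mul.1 hconj))

theorem card_eq_six_of_notMem (hx : IsUniqueNonInvolution x) (ha : a ∉ zpowers x) :
    Nat.card G = 6 := by
  rw [← (zpowers x).card_mul_index, Nat.card_zpowers, hx.orderOf_eq,
    hx.index_zpowers_eq_two_of_notMem ha]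

theorem sq_eq_one_of_notMem (hx : IsUniqueNonInvolution x) (ha : a ∉ zpowers x) : a ^ 2 = 1 :=
  not_not.1 (mt hx.mem_zpowers_of_sq_ne_one ha)

theorem index_zpowers_eq_three_of_notMem (hx : IsUniqueNonInvolution x) (ha : a ∉ zpowers x) :
    (zpowers a).index = 3 := by
  have ha1 : a ≠ 1 := fun h => ha (h ▸ one_mem _)
  have hcard : 2 * (zpowers a).index = 6 := by
    rw [← hx.card_eq_six_of_notMem ha, ← (zpowers a).card_mul_index, Nat.card_zpowers,
      orderOf_eq_prime (hx.sq_eq_one_of_notMem ha) ha1]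
  lia

theorem normalCore_zpowers_eq_bot_of_notMem (hx : IsUniqueNonInvolution x) (ha : a ∉ zpowers x) :
    (zpowers a).normalCore = ⊥ := by
  have ha2 : a ^ 2 = 1 := hx.sq_eq_one_of_notMem ha
  rw [eq_bot_iff]
  intro g hg
  by_contra hg1
  obtain rfl : g = a := eq_of_mem_zpowers_of_sq_eq_one ha2 (normalCore_le _ hg) hg1
  have hconj : x * g * x⁻¹ = g :=
    eq_of_mem_zpowers_of_sq_eq_one ha2 (hg x) (mt conj_eq_one_iff.1 hg1)
  exact ha (hx.mem_zpowers_of_commute (mul_inv_eq_iff_eq_mul.1 hconj).symm)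

theorem nonempty_mulEquiv_zmod_three (hx : IsUniqueNonInvolution x) (htop : zpowers x = ⊤) :
    Nonempty (G ≃* Multiplicative (ZMod 3)) := by
  have hcard : Nat.card G = 3 := by rw [← hx.orderOf_eq, orderOf_eq_card_of_zpowers_eq_top htop]
  exact ⟨mulEquivOfPrimeCardEq (p := 3) hcard (by simp)⟩

theorem nonempty_mulEquiv_perm_three (hx : IsUniqueNonInvolution x) (ha : a ∉ zpowers x) :
    Nonempty (G ≃* Equiv.Perm (Fin 3)) := by
  have hindex : (zpowers a).index = 3 := hx.index_zpowers_eq_three_of_notMem ha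
  rw [← hindex]
  refine nonempty_mulEquiv_perm_of_normalCore_eq_bot (hx.normalCore_zpowers_eq_bot_of_notMem ha) ?_
  rw [hx.card_eq_six_of_notMem ha, hindex]
  rfl

theorem map {K : Type*} [Group K] (hx : IsUniqueNonInvolution x) (e : G ≃* K) :
    IsUniqueNonInvolution (e x) where
  orderOf_eq := by rw [e.orderOf_eq, hx.orderOf_eq]
  sq_eq_one_or y := by
    obtain ⟨y, rfl⟩ := e.surjective y
    simpa only [← map_pow, ← map_inv, e.injective.eq_iff, e.map_eq_one_iff]
      using hx.sq_eq_one_or y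

end IsUniqueNonInvolution

theorem isUniqueNonInvolution_ofAdd_one :
    IsUniqueNonInvolution (Multiplicative.ofAdd (1 : ZMod 3)) :=
  ⟨orderOf_eq_prime (by decide) (by decide), by decide⟩

theorem isUniqueNonInvolution_finRotate_three : IsUniqueNonInvolution (finRotate 3) :=
  ⟨orderOf_eq_prime (by decide) (by decide), by decide⟩

theorem exists_isUniqueNonInvolution_iff {G : Type*} [Group G] :
    (∃ x : G, IsUniqueNonInvolution x) ↔
      Nonempty (G ≃* Multiplicative (ZMod 3)) ∨ Nonempty (G ≃* Equiv.Perm (Fin 3)) := by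
  constructor
  · rintro ⟨x, hx⟩
    by_cases htop : zpowers x = ⊤
    · exact .inl (hx.nonempty_mulEquiv_zmod_three htop)
    · obtain ⟨a, ha⟩ : ∃ a, a ∉ zpowers x := by simpa [eq_top_iff'] using htop
      exact .inr (hx.nonempty_mulEquiv_perm_three ha)
  · rintro (⟨⟨e⟩⟩ | ⟨⟨e⟩⟩)
    · exact ⟨_, isUniqueNonInvolution_ofAdd_one.map e.symm⟩
    · exact ⟨_, isUniqueNonInvolution_finRotate_three.map e.symm⟩

theorem lambda_eq_card_sub_two_iff {G : Type*} [Group G] [Finite G] :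
    Nat.card G = lambdaCover G + 2 ↔
      (Nonempty (G ≃* Multiplicative (ZMod 3)) ∨
       Nonempty (G ≃* Equiv.Perm (Fin 3))) := by
  rw [card_eq_lambdaCover_add_two_iff_exists_isGeneratorTransversal,
    ← exists_isUniqueNonInvolution_iff]
  exact exists_congr fun v =>
    ⟨fun ⟨hv, hS⟩ => hS.isUniqueNonInvolution hv, fun hv => ⟨hv.ne_one, hv.isGeneratorTransversal⟩⟩
end

section
/- Let G be a finite group. Then λ(G) = |G| − 4 if and only if G is isomorphic to one of: C_5, D_10 (dihedral of order 10), C_4 × C_2, or D_8 × C_2. -/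
/-!
Choose one generator of each maximal cyclic subgroup; the `|G| - λ(G) = 4` remaining elements
include all but one element of every maximal cyclic subgroup. So either some `⟨x⟩` has order five
and accounts for all four of them, in which case every element outside `⟨x⟩` is an involution
inverting `x`, or every element has order at most four. In the latter case, if `N` elements satisfy
`g ^ 2 ≠ 1` and `Q` involutions are squares, the remaining elements are the identity, the square
involutions and half of the `N` elements, so `N / 2 + Q + 1 = 4`. Elements of order three are
excluded by counting modulo three, which leaves `N = 4` and `Q = 1`: the four elements are
`a, a⁻¹, b, b⁻¹` with a common square, and `a * b` is an involution commuting with `a`. The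
elements outside the centralizer of `a` are involutions inverting it.
-/

open Subgroup

section SmallPowers

variable {G : Type*} [Group G] {g s : G}

theorem exists_pow_eq_of_mem_zpowers {n : ℕ} [NeZero n] (hs : s ^ n = 1) (hg : g ∈ zpowers s) :
    ∃ k < n, s ^ k = g := by
  obtain ⟨k, rfl⟩ := hg
  have hn : (n : ℤ) ≠ 0 := mod_cast NeZero.ne n
  lift k % (n : ℤ) to ℕ using Int.emod_nonneg k hn with r hr
  refine ⟨r, ?_, ?_⟩
  · have := Int.emod_lt_of_pos k (show (0 : ℤ) < n by omega)
    omega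
  · simp only [zpow_eq_zpow_emod' k hs, ← hr, zpow_natCast]

theorem eq_one_or_eq_of_mem_zpowers (hs : s ^ 2 = 1) (hg : g ∈ zpowers s) : g = 1 ∨ g = s := by
  obtain ⟨k, hk, rfl⟩ := exists_pow_eq_of_mem_zpowers hs hg
  interval_cases k <;> simp

theorem inv_eq_pow_three (hs : s ^ 4 = 1) : s⁻¹ = s ^ 3 :=
  inv_eq_of_mul_eq_one_right (by rw [← pow_succ', hs])

theorem eq_of_mem_zpowers_of_pow_four_eq_one (hs : s ^ 4 = 1) (hg : g ∈ zpowers s) :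
    g = 1 ∨ g = s ∨ g = s⁻¹ ∨ g = s ^ 2 := by
  obtain ⟨k, hk, rfl⟩ := exists_pow_eq_of_mem_zpowers hs hg
  rw [inv_eq_pow_three hs]
  interval_cases k <;> simp

theorem eq_of_mem_zpowers_of_pow_three_eq_one (hs : s ^ 3 = 1) (hg : g ∈ zpowers s) :
    g = 1 ∨ g = s ∨ g = s⁻¹ := by
  obtain ⟨k, hk, rfl⟩ := exists_pow_eq_of_mem_zpowers hs hg
  rw [inv_eq_of_mul_eq_one_right (show s * s ^ 2 = 1 by rw [← pow_succ', hs])]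
  interval_cases k <;> simp

theorem pow_three_eq_one_or_pow_four_eq_one [Finite G] (hg : orderOf g ≤ 4) :
    g ^ 3 = 1 ∨ g ^ 4 = 1 := by
  have hpos := orderOf_pos g
  simp only [← orderOf_dvd_iff_pow_eq_one]
  interval_cases orderOf g <;> decide

theorem inv_eq_self_of_sq_eq_one (hg : g ^ 2 = 1) : g⁻¹ = g :=
  inv_eq_of_mul_eq_one_right (by rw [← sq, hg])

theorem sq_eq_one_of_inv_eq_self (hg : g⁻¹ = g) : g ^ 2 = 1 := by
  rw [sq, ← inv_eq_iff_mul_eq_one, hg]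

end SmallPowers

section Isomorphism

variable {G H : Type*} [Group G] [Group H]

theorem IsMaximalCyclic.mapSubgroup (e : G ≃* H) {K : Subgroup G} (hK : IsMaximalCyclic K) :
    IsMaximalCyclic (e.mapSubgroup K) := by
  refine ⟨(e.subgroupMap K).isCyclic.1 hK.1, fun L hL hKL => ?_⟩
  have hcyclic : IsCyclic (e.symm.mapSubgroup L) := (e.symm.subgroupMap L).isCyclic.1 hL
  have hle : K ≤ e.mapSubgroup.symm L := (OrderIso.le_symm_apply _).2 hKL
  exact (OrderIso.eq_symm_apply _).1 (hK.2 _ hcyclic hle)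

theorem lambdaCover_congr (e : G ≃* H) : lambdaCover G = lambdaCover H :=
  Nat.card_congr <| e.mapSubgroup.toEquiv.subtypeEquiv fun K =>
    ⟨.mapSubgroup e, fun h => (e.mapSubgroup.symm_apply_apply K) ▸ h.mapSubgroup e.symm⟩

end Isomorphism

section Transversal

variable {G : Type*} [Group G]

/-- A set containing exactly one generator of each maximal cyclic subgroup, encoded without
mentioning subgroups: every element is a power of a member of the set, and no member is a power of
another. It turns counting maximal cyclic subgroups into counting elements. -/
structure IsMaximalCyclicTransversal (S : Set G) : Prop where
  exists_mem_zpowers : ∀ g : G, ∃ s ∈ S, g ∈ zpowers s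
  eq_of_mem_zpowers : ∀ ⦃s⦄, s ∈ S → ∀ ⦃t⦄, t ∈ S → s ∈ zpowers t → s = t

theorem exists_isMaximalCyclic_mem [Finite G] (g : G) :
    ∃ K : Subgroup G, IsMaximalCyclic K ∧ g ∈ K := by
  obtain ⟨K, hgK, hK⟩ := (Set.toFinite {K : Subgroup G | IsCyclic K}).exists_le_maximal
    (isCyclic_zpowers g)
  exact ⟨K, ⟨hK.1, fun L hL hKL => le_antisymm hKL (hK.2 hL hKL)⟩, hgK (mem_zpowers g)⟩

variable (G) in
theorem exists_isMaximalCyclicTransversal [Finite G] :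
    ∃ S : Set G, IsMaximalCyclicTransversal S := by
  choose gen hgen using fun K : {K : Subgroup G // IsMaximalCyclic K} =>
    K.1.isCyclic_iff_exists_zpowers_eq_top.1 K.2.1
  refine ⟨Set.range gen, fun g => ?_, ?_⟩
  · obtain ⟨K, hK, hgK⟩ := exists_isMaximalCyclic_mem g
    exact ⟨gen ⟨K, hK⟩, ⟨_, rfl⟩, by rwa [hgen]⟩
  · rintro _ ⟨K, rfl⟩ _ ⟨L, rfl⟩ hKL
    refine congrArg gen (Subtype.ext (K.2.2 _ L.2.1 ?_))
    rwa [← hgen K, zpowers_le, ← hgen L]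

namespace IsMaximalCyclicTransversal

variable {S : Set G}

theorem isMaximalCyclic_zpowers (hS : IsMaximalCyclicTransversal S) {s : G} (hs : s ∈ S) :
    IsMaximalCyclic (zpowers s) := by
  refine ⟨isCyclic_zpowers s, fun K hK hsK => ?_⟩
  obtain ⟨y, rfl⟩ := K.isCyclic_iff_exists_zpowers_eq_top.1 hK
  obtain ⟨t, ht, hyt⟩ := hS.exists_mem_zpowers y
  rw [← zpowers_le] at hyt
  obtain rfl := hS.eq_of_mem_zpowers hs ht (hyt (hsK (mem_zpowers s)))
  exact le_antisymm hsK hyt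

theorem ncard_eq_lambdaCover (hS : IsMaximalCyclicTransversal S) : S.ncard = lambdaCover G := by
  refine Nat.card_congr <| Equiv.ofBijective
    (fun s : S => (⟨zpowers s.1, hS.isMaximalCyclic_zpowers s.2⟩ :
      {K : Subgroup G // IsMaximalCyclic K})) ⟨fun s t hst => ?_, ?_⟩
  · have hzpowers : zpowers s.1 = zpowers t.1 := congrArg Subtype.val hst
    exact Subtype.ext (hS.eq_of_mem_zpowers s.2 t.2 (hzpowers ▸ mem_zpowers s.1))
  · rintro ⟨K, hK⟩
    obtain ⟨y, rfl⟩ := K.isCyclic_iff_exists_zpowers_eq_top.1 hK.1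
    obtain ⟨s, hs, hys⟩ := hS.exists_mem_zpowers y
    exact ⟨⟨s, hs⟩, Subtype.ext (hK.2 _ (isCyclic_zpowers s) (zpowers_le.2 hys)).symm⟩

theorem lambdaCover_add_ncard_compl [Finite G] (hS : IsMaximalCyclicTransversal S) :
    lambdaCover G + Sᶜ.ncard = Nat.card G := by
  rw [← hS.ncard_eq_lambdaCover, Set.ncard_add_ncard_compl]

theorem sq_eq_one_of_inv_mem (hS : IsMaximalCyclicTransversal S) {g : G} (hg : g ∈ S)
    (hginv : g⁻¹ ∈ S) : g ^ 2 = 1 := by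
  have hself : g = g⁻¹ := hS.eq_of_mem_zpowers hg hginv (by simp)
  exact sq_eq_one_of_inv_eq_self hself.symm

theorem zpowers_diff_subset_compl (hS : IsMaximalCyclicTransversal S) {s : G} (hs : s ∈ S) :
    (zpowers s : Set G) \ {s} ⊆ Sᶜ :=
  fun _ hg hgS => hg.2 (hS.eq_of_mem_zpowers hgS hs hg.1)

end IsMaximalCyclicTransversal

theorem ncard_zpowers_diff_add_one [Finite G] (x : G) :
    ((zpowers x : Set G) \ {x}).ncard + 1 = orderOf x := by
  rw [Set.ncard_sdiff_singleton_add_one (mem_zpowers x), ← Nat.card_zpowers]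
  rfl

theorem exists_orderOf_eq_or_forall_orderOf_le [Finite G] {k : ℕ}
    (hcard : Nat.card G = lambdaCover G + k) :
    (∃ x : G, orderOf x = k + 1 ∧ ∀ g ∉ zpowers x, g ^ 2 = 1) ∨ ∀ g : G, orderOf g ≤ k := by
  obtain ⟨S, hS⟩ := exists_isMaximalCyclicTransversal G
  have hcompl : Sᶜ.ncard = k := by have := hS.lambdaCover_add_ncard_compl; omega
  by_cases hx : ∃ x ∈ S, k < orderOf x
  · obtain ⟨x, hxS, hkx⟩ := hx
    have hdiff := ncard_zpowers_diff_add_one x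
    have hEq : (zpowers x : Set G) \ {x} = Sᶜ :=
      Set.eq_of_subset_of_ncard_le (hS.zpowers_diff_subset_compl hxS) (by omega)
    have hmem : ∀ g ∉ zpowers x, g ∈ S := fun g hg => by
      by_contra hgS
      exact hg (hEq.symm.subset hgS).1
    refine .inl ⟨x, by rw [← hdiff, hEq, hcompl], fun g hg => ?_⟩
    exact hS.sq_eq_one_of_inv_mem (hmem g hg) (hmem g⁻¹ (by rwa [inv_mem_iff]))
  · push Not at hx
    refine .inr fun g => ?_
    obtain ⟨s, hs, hgs⟩ := hS.exists_mem_zpowers g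
    exact (Nat.le_of_dvd (orderOf_pos s) (orderOf_dvd_of_mem_zpowers hgs)).trans (hx s hs)

end Transversal

section LambdaFormulas

variable {G : Type*} [Group G]

theorem isMaximalCyclicTransversal_insert_compl_zpowers {x : G} (hx : x ≠ 1)
    (hsq : ∀ g ∉ zpowers x, g ^ 2 = 1) :
    IsMaximalCyclicTransversal (insert x (zpowers x : Set G)ᶜ) := by
  have hself : ∀ s ∉ zpowers x, ∀ g ≠ 1, g ∈ zpowers s → g = s := fun s hs g hg hgs =>
    (eq_one_or_eq_of_mem_zpowers (hsq s hs) hgs).resolve_left hg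
  refine ⟨fun g => ?_, ?_⟩
  · by_cases hg : g ∈ zpowers x
    · exact ⟨x, .inl rfl, hg⟩
    · exact ⟨g, .inr hg, mem_zpowers g⟩
  · rintro s (rfl | hs) t (rfl | ht) hst
    · rfl
    · exact hself t ht s hx hst
    · exact absurd hst hs
    · exact hself t ht s (fun h => hs (h ▸ one_mem _)) hst

theorem lambdaCover_add_orderOf [Finite G] {x : G} (hx : x ≠ 1)
    (hsq : ∀ g ∉ zpowers x, g ^ 2 = 1) : lambdaCover G + orderOf x = Nat.card G + 1 := by
  have hS := isMaximalCyclicTransversal_insert_compl_zpowers hx hsq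
  have hcompl : (insert x (zpowers x : Set G)ᶜ)ᶜ = (zpowers x : Set G) \ {x} := by
    ext g; simp [and_comm]
  rw [← hS.lambdaCover_add_ncard_compl, hcompl, add_assoc, ncard_zpowers_diff_add_one]

variable (G) in
/-- The involutions that are squares: in a group whose elements have order at most four these are
the involutions that do not generate a maximal cyclic subgroup. -/
def squareInvolutions : Set G := {z | z ≠ 1 ∧ z ^ 2 = 1 ∧ IsSquare z}

namespace IsMaximalCyclicTransversal

variable {S : Set G} {x : G}

theorem one_notMem [Nontrivial G] (hS : IsMaximalCyclicTransversal S) : 1 ∉ S := by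
  intro hone
  obtain ⟨g, hg⟩ := exists_ne (1 : G)
  obtain ⟨s, hs, hgs⟩ := hS.exists_mem_zpowers g
  obtain rfl := hS.eq_of_mem_zpowers hone hs (one_mem _)
  exact hg (by simpa using hgs)

theorem exists_eq_inv_or_eq_sq (hS : IsMaximalCyclicTransversal S)
    (hpow : ∀ g : G, g ^ 3 = 1 ∨ g ^ 4 = 1) (hx : x ∉ S) (hx1 : x ≠ 1) :
    ∃ s ∈ S, x = s⁻¹ ∨ x = s ^ 2 ∧ s ^ 4 = 1 := by
  obtain ⟨s, hs, hxs⟩ := hS.exists_mem_zpowers x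
  have hne : x ≠ s := fun h => hx (h ▸ hs)
  refine ⟨s, hs, ?_⟩
  rcases hpow s with h3 | h4
  · have := eq_of_mem_zpowers_of_pow_three_eq_one h3 hxs
    tauto
  · have := eq_of_mem_zpowers_of_pow_four_eq_one h4 hxs
    tauto

theorem inv_mem_iff_notMem (hS : IsMaximalCyclicTransversal S)
    (hpow : ∀ g : G, g ^ 3 = 1 ∨ g ^ 4 = 1) (hx : x ^ 2 ≠ 1) : x⁻¹ ∈ S ↔ x ∉ S := by
  refine ⟨fun hinv hxS => hx (hS.sq_eq_one_of_inv_mem hxS hinv), fun hxS => ?_⟩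
  have hx1 : x ≠ 1 := by rintro rfl; simp at hx
  obtain ⟨s, hs, rfl | ⟨rfl, hs4⟩⟩ := hS.exists_eq_inv_or_eq_sq hpow hxS hx1
  · rwa [inv_inv]
  · exact absurd (by rw [← pow_mul, hs4]) hx

theorem ncard_sq_ne_one_eq_two_mul [Finite G] (hS : IsMaximalCyclicTransversal S)
    (hpow : ∀ g : G, g ^ 3 = 1 ∨ g ^ 4 = 1) :
    {g : G | g ^ 2 ≠ 1}.ncard = 2 * (Sᶜ ∩ {g | g ^ 2 ≠ 1}).ncard := by
  have himage : Inv.inv '' (Sᶜ ∩ {g | g ^ 2 ≠ 1}) = S ∩ {g | g ^ 2 ≠ 1} := by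
    ext g
    rw [Set.image_inv_eq_inv, Set.mem_inv]
    simp only [Set.mem_inter_iff, Set.mem_compl_iff, Set.mem_ofPred_eq, inv_pow, inv_ne_one]
    refine and_congr_left fun hg => ?_
    rw [hS.inv_mem_iff_notMem hpow hg, not_not]
  have hhalf := Set.ncard_image_of_injective (Sᶜ ∩ {g | g ^ 2 ≠ 1}) (inv_injective (G := G))
  rw [himage, Set.inter_comm] at hhalf
  rw [← Set.ncard_inter_add_ncard_sdiff_eq_ncard _ S, hhalf, Set.sdiff_eq, Set.inter_comm _ Sᶜ,
    two_mul]

theorem mem_squareInvolutions_iff (hS : IsMaximalCyclicTransversal S)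
    (hpow : ∀ g : G, g ^ 3 = 1 ∨ g ^ 4 = 1) (hx1 : x ≠ 1) (hx2 : x ^ 2 = 1) :
    x ∈ squareInvolutions G ↔ x ∉ S := by
  refine ⟨fun ⟨_, _, c, hc⟩ hxS => ?_, fun hxS => ⟨hx1, hx2, ?_⟩⟩
  · obtain ⟨s, hs, hcs⟩ := hS.exists_mem_zpowers c
    obtain rfl := hS.eq_of_mem_zpowers hxS hs (hc ▸ mul_mem hcs hcs)
    rcases eq_one_or_eq_of_mem_zpowers hx2 hcs with rfl | rfl
    · exact hx1 (by simpa using hc)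
    · exact hx1 (by simpa using hc)
  · obtain ⟨s, hs, rfl | ⟨rfl, -⟩⟩ := hS.exists_eq_inv_or_eq_sq hpow hxS hx1
    · rw [inv_eq_self_of_sq_eq_one (by simpa using hx2)] at hxS
      exact absurd hs hxS
    · exact ⟨s, sq s⟩

theorem compl_diff_sq_ne_one_eq [Nontrivial G] (hS : IsMaximalCyclicTransversal S)
    (hpow : ∀ g : G, g ^ 3 = 1 ∨ g ^ 4 = 1) :
    Sᶜ \ {g | g ^ 2 ≠ 1} = insert 1 (squareInvolutions G) := by
  ext x
  by_cases hx1 : x = 1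
  · simp [hx1, hS.one_notMem]
  by_cases hx2 : x ^ 2 = 1
  · simp [hx1, hx2, hS.mem_squareInvolutions_iff hpow hx1 hx2]
  · simp [hx1, hx2, squareInvolutions]

end IsMaximalCyclicTransversal

theorem two_mul_card_eq_lambdaCover_add [Finite G] [Nontrivial G]
    (hpow : ∀ g : G, g ^ 3 = 1 ∨ g ^ 4 = 1) :
    2 * Nat.card G =
      2 * lambdaCover G + {g : G | g ^ 2 ≠ 1}.ncard + 2 * (squareInvolutions G).ncard + 2 := by
  obtain ⟨S, hS⟩ := exists_isMaximalCyclicTransversal G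
  have hcard := hS.lambdaCover_add_ncard_compl
  have hnonInv := hS.ncard_sq_ne_one_eq_two_mul hpow
  have hsplit := Set.ncard_inter_add_ncard_sdiff_eq_ncard Sᶜ {g : G | g ^ 2 ≠ 1}
  rw [hS.compl_diff_sq_ne_one_eq hpow,
    Set.ncard_insert_of_notMem fun h => h.1 rfl] at hsplit
  omega

end LambdaFormulas

section Counting

variable {G : Type*} [Group G]

theorem sq_mem_squareInvolutions {c : G} (hc2 : c ^ 2 ≠ 1) (hc4 : c ^ 4 = 1) :
    c ^ 2 ∈ squareInvolutions G :=
  ⟨hc2, by rw [← pow_mul, hc4], c, sq c⟩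

-- The square roots of an involution come in pairs `c ≠ c⁻¹`.
theorem two_mul_ncard_squareInvolutions_le [Finite G] :
    2 * (squareInvolutions G).ncard ≤ {g : G | g ^ 2 ≠ 1}.ncard := by
  classical
  have := Fintype.ofFinite G
  rw [Set.ncard_eq_toFinset_card', Set.ncard_eq_toFinset_card']
  refine (Finset.mul_card_image_le_card_of_maps_to (f := (· ^ 2))
    (s := {g : G | g ^ 2 ∈ squareInvolutions G}) (by simp) 2 fun z hz => ?_).trans
    (Finset.card_le_card fun g hg => by simpa using (Finset.mem_filter_univ g).1 hg |>.1)
  rw [Set.mem_toFinset] at hz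
  obtain ⟨hz1, hz2, c, rfl⟩ := id hz
  rw [← sq] at hz hz1 hz2
  have hne : c ≠ c⁻¹ := fun h => hz1 (sq_eq_one_of_inv_eq_self h.symm)
  refine (Finset.card_pair hne).symm.le.trans (Finset.card_le_card fun g hg => ?_)
  rcases Finset.mem_insert.1 hg with rfl | hg
  · simpa [← sq] using hz
  · obtain rfl := Finset.mem_singleton.1 hg
    simpa [← sq, inv_eq_self_of_sq_eq_one hz2] using hz

theorem ncard_modEq_ncard_inter_centralizer [Finite G] {p : ℕ} [Fact p.Prime] {x : G}
    (hx : x ^ p = 1) {A : Set G} (hA : ∀ a ∈ A, x * a * x⁻¹ ∈ A) :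
    A.ncard ≡ (A ∩ centralizer {x}).ncard [MOD p] := by
  classical
  have := Fintype.ofFinite G
  let conj : Function.End A := fun a => ⟨x * a * x⁻¹, hA a a.2⟩
  have hpow : ∀ k a, (((conj ^ k) a : A) : G) = x ^ k * a * (x ^ k)⁻¹ := by
    intro k
    induction k with
    | zero => intro a; simp only [pow_zero, one_mul, inv_one, mul_one]; rfl
    | succ k ih =>
      intro a
      rw [pow_succ]
      change ((conj ^ k) (conj a) : G) = _
      rw [ih, pow_succ]
      simp [conj, mul_assoc]
  have hconj : conj ^ p ^ 1 = 1 := by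
    funext a
    refine Subtype.ext ((hpow (p ^ 1) a).trans ?_)
    rw [pow_one, hx, one_mul, inv_one, mul_one]
    rfl
  have hfixed : Subtype.val '' conj.fixedPoints = A ∩ centralizer {x} := by
    ext a
    simp [conj, Function.mem_fixedPoints, Function.IsFixedPt, mem_centralizer_singleton_iff,
      mul_inv_eq_iff_eq_mul, and_comm, eq_comm (a := a * x)]
  have hmod := Equiv.Perm.card_fixedPoints_modEq hconj
  rwa [← Nat.card_eq_fintype_card, ← Nat.card_eq_fintype_card, Nat.card_coe_set_eq,
    Nat.card_coe_set_eq, ← Set.ncard_image_of_injective _ Subtype.val_injective, hfixed] at hmod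

/-
An involution centralizing `x` would yield an element of order six, so the elements of
`{g | g ^ 2 ≠ 1}` fixed under conjugation by `x` are the nontrivial elements of the centralizer of
`x`, whose order is divisible by three.
-/
theorem ncard_sq_ne_one_mod_three [Finite G] (hpow : ∀ g : G, g ^ 3 = 1 ∨ g ^ 4 = 1) {x : G}
    (hx : orderOf x = 3) : {g : G | g ^ 2 ≠ 1}.ncard % 3 = 2 := by
  have hx3 : x ^ 3 = 1 := hx ▸ pow_orderOf_eq_one x
  have hx1 : x ≠ 1 := by rintro rfl; simp at hx
  have hfixed : {g : G | g ^ 2 ≠ 1} ∩ centralizer {x} = (centralizer {x} : Set G) \ {1} := by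
    ext g
    simp only [Set.mem_inter_iff, Set.mem_ofPred_eq, SetLike.mem_coe, Set.mem_sdiff,
      Set.mem_singleton_iff, and_comm (a := g ^ 2 ≠ 1)]
    refine and_congr_right fun hg => ⟨fun h2 h1 => h2 (by simp [h1]), fun h1 h2 => ?_⟩
    have hgx : Commute g x := mem_centralizer_singleton_iff.1 hg
    have hcube : (g * x) ^ 3 = g := by rw [hgx.mul_pow, hx3, pow_succ, h2, one_mul, mul_one]
    have hfourth : (g * x) ^ 4 = x := by
      rw [hgx.mul_pow, pow_succ x, hx3, pow_mul g 2 2, h2, one_pow, one_mul, one_mul]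
    rcases hpow (g * x) with h | h
    · exact h1 (hcube.symm.trans h)
    · exact hx1 (hfourth.symm.trans h)
  have hmod := ncard_modEq_ncard_inter_centralizer (p := 3) hx3 (A := {g : G | g ^ 2 ≠ 1})
    fun g hg => by simpa [conj_pow] using hg
  have hcard := Set.ncard_sdiff_singleton_add_one (one_mem (centralizer {x}))
  have hdvd : 3 ∣ (centralizer {x} : Set G).ncard :=
    hx ▸ Subgroup.orderOf_dvd_natCard _ (mem_centralizer_singleton_iff.2 rfl)
  rw [hfixed, Nat.ModEq] at hmod
  omega

theorem pow_four_eq_one_of_ncard [Finite G] (hpow : ∀ g : G, g ^ 3 = 1 ∨ g ^ 4 = 1)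
    (hcount : {g : G | g ^ 2 ≠ 1}.ncard + 2 * (squareInvolutions G).ncard = 6) (g : G) :
    g ^ 4 = 1 := by
  by_contra h4
  have h3 : g ^ 3 = 1 := (hpow g).resolve_right h4
  have hg : g ≠ 1 := by rintro rfl; simp at h4
  have := ncard_sq_ne_one_mod_three hpow (orderOf_eq_prime h3 hg)
  have := two_mul_ncard_squareInvolutions_le (G := G)
  omega

theorem ncard_sq_ne_one_eq_four [Finite G] (hpow : ∀ g : G, g ^ 4 = 1)
    (hcount : {g : G | g ^ 2 ≠ 1}.ncard + 2 * (squareInvolutions G).ncard = 6) :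
    {g : G | g ^ 2 ≠ 1}.ncard = 4 ∧ (squareInvolutions G).ncard = 1 := by
  have hle := two_mul_ncard_squareInvolutions_le (G := G)
  have hnonempty : {g : G | g ^ 2 ≠ 1}.Nonempty := by
    apply Set.nonempty_of_ncard_ne_zero
    omega
  obtain ⟨c, hc⟩ := hnonempty
  have hpos : 0 < (squareInvolutions G).ncard :=
    (Set.ncard_pos (Set.toFinite _)).2 ⟨_, sq_mem_squareInvolutions hc (hpow c)⟩
  omega

theorem sq_eq_sq_of_ncard_squareInvolutions_eq_one (hpow : ∀ g : G, g ^ 4 = 1)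
    (hcount : (squareInvolutions G).ncard = 1) {a b : G} (ha : a ^ 2 ≠ 1) (hb : b ^ 2 ≠ 1) :
    a ^ 2 = b ^ 2 := by
  obtain ⟨z, hz⟩ := Set.ncard_eq_one.1 hcount
  have hsq : ∀ c : G, c ^ 2 ≠ 1 → c ^ 2 = z := fun c hc =>
    hz.subset (sq_mem_squareInvolutions hc (hpow c))
  rw [hsq a ha, hsq b hb]

theorem ncard_sq_ne_one_eq_four_and_sq_eq_sq [Finite G]
    (hcard : Nat.card G = lambdaCover G + 4) (horder : ∀ g : G, orderOf g ≤ 4) :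
    {g : G | g ^ 2 ≠ 1}.ncard = 4 ∧ ∀ a b : G, a ^ 2 ≠ 1 → b ^ 2 ≠ 1 → a ^ 2 = b ^ 2 := by
  have : Nontrivial G := Finite.one_lt_card_iff_nontrivial.1 (by omega)
  have hpow : ∀ g : G, g ^ 3 = 1 ∨ g ^ 4 = 1 := fun g =>
    pow_three_eq_one_or_pow_four_eq_one (horder g)
  have hcount : {g : G | g ^ 2 ≠ 1}.ncard + 2 * (squareInvolutions G).ncard = 6 := by
    have := two_mul_card_eq_lambdaCover_add hpow
    omega
  have hpow4 := pow_four_eq_one_of_ncard hpow hcount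
  obtain ⟨hfour, hone⟩ := ncard_sq_ne_one_eq_four hpow4 hcount
  exact ⟨hfour, fun a b => sq_eq_sq_of_ncard_squareInvolutions_eq_one hpow4 hone⟩

end Counting

section InvertingInvolutions

variable {G : Type*} [Group G] {H : Subgroup G} {t : G}

theorem semiconjBy_inv_of_notMem (hH : ∀ g ∉ H, g ^ 2 = 1) (ht : t ∉ H) {h : G} (hh : h ∈ H) :
    SemiconjBy t h h⁻¹ := by
  have hth : (t * h) ^ 2 = 1 := hH _ ((H.mul_mem_cancel_right hh).not.2 ht)
  calc t * h = (t * h)⁻¹ := (inv_eq_self_of_sq_eq_one hth).symm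
    _ = h⁻¹ * t := by rw [mul_inv_rev, inv_eq_self_of_sq_eq_one (hH t ht)]

-- The product inverts and centralizes `x` if it lies outside `H`.
theorem mul_mem_of_notMem_of_notMem (hH : ∀ g ∉ H, g ^ 2 = 1) {x : G} (hx : x ∈ H)
    (hx2 : x ^ 2 ≠ 1) (ht : t ∉ H) {g : G} (hg : g ∉ H) : t * g ∈ H := by
  by_contra htg
  have hinvert : SemiconjBy (t * g) x x⁻¹ := semiconjBy_inv_of_notMem hH htg hx
  have hcommute : SemiconjBy (t * g) x x := by
    simpa using (semiconjBy_inv_of_notMem hH ht hx).inv_right.mul_left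
      (semiconjBy_inv_of_notMem hH hg hx)
  exact hx2 (sq_eq_one_of_inv_eq_self (mul_right_cancel (hinvert.eq.symm.trans hcommute.eq)))

end InvertingInvolutions

section Recognition

variable {G : Type*} [Group G] {n : ℕ} {x t u : G}

theorem exists_injective_hom_range_eq_zpowers (hx : orderOf x = n) :
    ∃ φ : Multiplicative (ZMod n) →* G, Function.Injective φ ∧ φ.range = zpowers x := by
  have hgen : ∀ y : zpowers x, y ∈ zpowers (⟨x, mem_zpowers x⟩ : zpowers x) := by
    rintro ⟨_, k, rfl⟩
    exact ⟨k, rfl⟩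
  let e := zmodMulEquivOfGenerator hgen ((Nat.card_zpowers x).trans hx)
  refine ⟨(zpowers x).subtype.comp e.toMonoidHom,
    (zpowers x).subtype_injective.comp e.injective, ?_⟩
  rw [MonoidHom.range_comp, MonoidHom.range_eq_top_of_surjective e.toMonoidHom e.surjective,
    ← MonoidHom.range_eq_map, range_subtype]

/-- The homomorphism from the dihedral group of order `2 * n` determined by the image `φ` of the
rotations and the image `t` of the reflection `sr 0`. -/
def dihedralLift (φ : Multiplicative (ZMod n) →* G) (ht : t ^ 2 = 1)
    (hinvert : ∀ i, SemiconjBy t (φ i) (φ i)⁻¹) : DihedralGroup n →* G :=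
  MonoidHom.mk'
    (fun
      | .r i => φ (.ofAdd i)
      | .sr i => t * φ (.ofAdd i))
    (by
      have hswap : ∀ i g, φ i * (t * g) = t * ((φ i)⁻¹ * g) := fun i g => by
        simpa [mul_assoc] using congrArg (· * g) (hinvert i⁻¹).eq.symm
      have htt : ∀ g, t * (t * g) = g := fun g => by rw [← mul_assoc, ← sq, ht, one_mul]
      rintro (i | i) (j | j) <;>
        simp [ofAdd_sub, hswap, htt, mul_assoc, div_eq_inv_mul])

theorem exists_injective_dihedralGroup_hom (hx : orderOf x = n) (ht : t ^ 2 = 1)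
    (htx : t ∉ zpowers x) (hinvert : ∀ h ∈ zpowers x, SemiconjBy t h h⁻¹) :
    ∃ f : DihedralGroup n →* G, Function.Injective f ∧
      ∀ g, g ∈ f.range ↔ g ∈ zpowers x ∨ t * g ∈ zpowers x := by
  obtain ⟨φ, hφ, hrange⟩ := exists_injective_hom_range_eq_zpowers hx
  have hmem : ∀ i, φ i ∈ zpowers x := fun i => hrange ▸ ⟨i, rfl⟩
  let f := dihedralLift φ ht fun i => hinvert _ (hmem i)
  have htt : ∀ g, t * (t * g) = g := fun g => by rw [← mul_assoc, ← sq, ht, one_mul]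
  refine ⟨f, (injective_iff_map_eq_one f).2 ?_, fun g => ⟨?_, ?_⟩⟩
  · rintro (i | i) hi
    · exact congrArg DihedralGroup.r ((map_eq_one_iff φ hφ).1 hi)
    · exact absurd (eq_inv_of_mul_eq_one_left hi ▸ inv_mem (hmem _)) htx
  · rintro ⟨i | i, rfl⟩
    · exact .inl (hmem _)
    · exact .inr ((htt _).symm ▸ hmem _)
  · rw [← hrange]
    rintro (⟨i, hi⟩ | ⟨i, hi⟩)
    · exact ⟨.r i.toAdd, hi⟩
    · exact ⟨.sr i.toAdd, (congrArg (t * ·) hi).trans (htt g)⟩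

theorem nonempty_mulEquiv_prod_zmod_two {A : Type*} [Group A] {f : A →* G}
    (hf : Function.Injective f) (hu : u ^ 2 = 1) (huf : u ∉ f.range)
    (hcomm : f.range ≤ centralizer {u}) (hcover : ∀ g, g ∈ f.range ∨ u * g ∈ f.range) :
    Nonempty (G ≃* A × Multiplicative (ZMod 2)) := by
  have hu1 : u ≠ 1 := fun h => huf (h ▸ one_mem _)
  obtain ⟨φ, hφ, hrange⟩ := exists_injective_hom_range_eq_zpowers (orderOf_eq_prime hu hu1)
  have hφcomm : ∀ a i, Commute (f a) (φ i) := fun a i => by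
    obtain ⟨k, hk⟩ : φ i ∈ zpowers u := hrange ▸ ⟨i, rfl⟩
    have hfu : Commute (f a) u := mem_centralizer_singleton_iff.1 (hcomm ⟨a, rfl⟩)
    exact hk ▸ hfu.zpow_right k
  have hdisjoint : Disjoint f.range φ.range := by
    rw [hrange, disjoint_def]
    exact fun hg hgu => (eq_one_or_eq_of_mem_zpowers hu hgu).resolve_right (huf <| · ▸ hg)
  have htop : f.range ⊔ φ.range = ⊤ := by
    rw [hrange, eq_top_iff']
    intro g
    rcases hcover g with hg | hg
    · exact mem_sup_left hg
    · exact (mul_mem_cancel_left (mem_sup_right (mem_zpowers u))).1 (mem_sup_left hg)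
  refine ⟨(MulEquiv.ofBijective (f.noncommCoprod φ hφcomm) ⟨?_, ?_⟩).symm⟩
  · exact (f.noncommCoprod_injective φ hφcomm).2 ⟨hf, hφ, hdisjoint⟩
  · rw [← MonoidHom.range_eq_top, MonoidHom.noncommCoprod_range, htop]

theorem nonempty_mulEquiv_zmod_or_dihedralGroup (hx : orderOf x = n) (hx2 : x ^ 2 ≠ 1)
    (hsq : ∀ g ∉ zpowers x, g ^ 2 = 1) :
    Nonempty (G ≃* Multiplicative (ZMod n)) ∨ Nonempty (G ≃* DihedralGroup n) := by
  by_cases htop : ∀ g, g ∈ zpowers x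
  · obtain ⟨φ, hφ, hrange⟩ := exists_injective_hom_range_eq_zpowers hx
    have hsurj : Function.Surjective φ := fun g => hrange.symm.le (htop g)
    exact .inl ⟨(MulEquiv.ofBijective φ ⟨hφ, hsurj⟩).symm⟩
  · push Not at htop
    obtain ⟨t, ht⟩ := htop
    obtain ⟨f, hf, hrange⟩ := exists_injective_dihedralGroup_hom hx (hsq t ht) ht fun _ =>
      semiconjBy_inv_of_notMem hsq ht
    have hsurj : Function.Surjective f := fun g => (hrange g).2 <| or_iff_not_imp_left.2 <|
      mul_mem_of_notMem_of_notMem hsq (mem_zpowers x) hx2 ht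
    exact .inr ⟨(MulEquiv.ofBijective f ⟨hf, hsurj⟩).symm⟩

-- If `g` is an involution centralizing `x`, the hypothesis applies to `g * x` instead.
theorem mem_zpowers_or_mul_mem_of_mem_centralizer (hx2 : x ^ 2 ≠ 1)
    (hcover : ∀ g, g ^ 2 ≠ 1 → g ∈ zpowers x ∨ u * g ∈ zpowers x) {g : G}
    (hg : g ∈ centralizer {x}) : g ∈ zpowers x ∨ u * g ∈ zpowers x := by
  by_cases hg2 : g ^ 2 = 1
  · have hgx : Commute g x := mem_centralizer_singleton_iff.1 hg
    have hmul := hcover (g * x) (by rwa [hgx.mul_pow, hg2, one_mul])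
    rwa [← mul_assoc, mul_mem_cancel_right (mem_zpowers x),
      mul_mem_cancel_right (mem_zpowers x)] at hmul
  · exact hcover g hg2

theorem nonempty_mulEquiv_zmod_prod (hx : orderOf x = n) (hu : u ^ 2 = 1)
    (hux : u ∈ centralizer {x}) (hu_notMem : u ∉ zpowers x)
    (hcover : ∀ g, g ∈ zpowers x ∨ u * g ∈ zpowers x) :
    Nonempty (G ≃* Multiplicative (ZMod n) × Multiplicative (ZMod 2)) := by
  obtain ⟨φ, hφ, hrange⟩ := exists_injective_hom_range_eq_zpowers hx
  refine nonempty_mulEquiv_prod_zmod_two hφ hu (by rwa [hrange]) ?_ (by rwa [hrange])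
  rw [hrange, zpowers_le]
  exact mem_centralizer_singleton_iff.2 (mem_centralizer_singleton_iff.1 hux).symm

theorem nonempty_mulEquiv_dihedralGroup_prod (hx : orderOf x = n) (hx2 : x ^ 2 ≠ 1)
    (hu : u ^ 2 = 1) (hux : u ∈ centralizer {x}) (hu_notMem : u ∉ zpowers x)
    (hcover : ∀ g ∈ centralizer {x}, g ∈ zpowers x ∨ u * g ∈ zpowers x)
    (hsq : ∀ g ∉ centralizer {x}, g ^ 2 = 1) (ht : t ∉ centralizer {x}) :
    Nonempty (G ≃* DihedralGroup n × Multiplicative (ZMod 2)) := by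
  have hxC : x ∈ centralizer {x} := mem_centralizer_singleton_iff.2 rfl
  have hzC : zpowers x ≤ centralizer {x} := zpowers_le.2 hxC
  have hxu : zpowers x ≤ centralizer {u} :=
    zpowers_le.2 (mem_centralizer_singleton_iff.2 (mem_centralizer_singleton_iff.1 hux).symm)
  have htu : Commute t u := by
    have hinvert := semiconjBy_inv_of_notMem hsq ht hux
    rwa [inv_eq_self_of_sq_eq_one hu] at hinvert
  obtain ⟨f, hf, hrange⟩ := exists_injective_dihedralGroup_hom hx (hsq t ht)
    (ht <| hzC ·) fun _ hh => semiconjBy_inv_of_notMem hsq ht (hzC hh)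
  refine nonempty_mulEquiv_prod_zmod_two hf hu ?_ (fun g hg => ?_) fun g => ?_
  · rw [hrange, not_or]
    exact ⟨hu_notMem, fun h => ht ((mul_mem_cancel_right hux).1 (hzC h))⟩
  · rcases (hrange g).1 hg with h | h
    · exact hxu h
    · exact (mul_mem_cancel_left (mem_centralizer_singleton_iff.2 htu)).1 (hxu h)
  · have htug : t * (u * g) = u * (t * g) := by rw [← mul_assoc, htu.eq, mul_assoc]
    rw [hrange, hrange, htug]
    by_cases hg : g ∈ centralizer {x}
    · exact (hcover g hg).imp .inl .inl
    · exact (hcover _ (mul_mem_of_notMem_of_notMem hsq hxC hx2 ht hg)).imp .inr .inr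

theorem nonempty_mulEquiv_zmod_prod_or_dihedralGroup_prod (hx : orderOf x = n) (hx2 : x ^ 2 ≠ 1)
    (hu : u ^ 2 = 1) (hux : u ∈ centralizer {x}) (hu_notMem : u ∉ zpowers x)
    (hcover : ∀ g, g ^ 2 ≠ 1 → g ∈ zpowers x ∨ u * g ∈ zpowers x) :
    Nonempty (G ≃* Multiplicative (ZMod n) × Multiplicative (ZMod 2)) ∨
      Nonempty (G ≃* DihedralGroup n × Multiplicative (ZMod 2)) := by
  have hcoverC : ∀ g ∈ centralizer {x}, g ∈ zpowers x ∨ u * g ∈ zpowers x := fun _ =>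
    mem_zpowers_or_mul_mem_of_mem_centralizer hx2 hcover
  by_cases htop : ∀ g, g ∈ centralizer {x}
  · exact .inl (nonempty_mulEquiv_zmod_prod hx hu hux hu_notMem fun g => hcoverC g (htop g))
  · push Not at htop
    obtain ⟨t, ht⟩ := htop
    have hzC : zpowers x ≤ centralizer {x} := zpowers_le.2 (mem_centralizer_singleton_iff.2 rfl)
    have hsq : ∀ g ∉ centralizer {x}, g ^ 2 = 1 := fun g hg => by
      by_contra hg2
      rcases hcover g hg2 with h | h
      · exact hg (hzC h)
      · exact hg ((mul_mem_cancel_left hux).1 (hzC h))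
    exact .inr (nonempty_mulEquiv_dihedralGroup_prod hx hx2 hu hux hu_notMem hcoverC hsq ht)

end Recognition

section FourNonInvolutions

variable {G : Type*} [Group G]

theorem exists_pair_of_ncard_sq_ne_one_eq_four (hcount : {g : G | g ^ 2 ≠ 1}.ncard = 4) :
    ∃ a b : G, a ^ 2 ≠ 1 ∧ b ^ 2 ≠ 1 ∧ b ≠ a ∧ b ≠ a⁻¹ ∧
      ∀ g : G, g ^ 2 ≠ 1 → g = a ∨ g = a⁻¹ ∨ g = b ∨ g = b⁻¹ := by
  have hne_inv : ∀ g : G, g ^ 2 ≠ 1 → g ≠ g⁻¹ := fun g hg h =>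
    hg (sq_eq_one_of_inv_eq_self h.symm)
  have hfinite : {g : G | g ^ 2 ≠ 1}.Finite := Set.finite_of_ncard_ne_zero (by omega)
  obtain ⟨a, ha⟩ : {g : G | g ^ 2 ≠ 1}.Nonempty := Set.nonempty_of_ncard_ne_zero (by omega)
  have hlt : ({a, a⁻¹} : Set G).ncard < {g : G | g ^ 2 ≠ 1}.ncard := by
    rw [hcount, Set.ncard_pair (hne_inv a ha)]
    norm_num
  obtain ⟨b, hb, hba⟩ := Set.exists_mem_notMem_of_ncard_lt_ncard hlt
  simp only [Set.mem_insert_iff, Set.mem_singleton_iff, not_or] at hba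
  have hsubset : ({a, a⁻¹, b, b⁻¹} : Set G) ⊆ {g | g ^ 2 ≠ 1} := by
    rintro g (rfl | rfl | rfl | rfl) <;> simpa
  have hfour : ({a, a⁻¹, b, b⁻¹} : Set G).ncard = 4 := by
    have ha_inv : a ≠ b⁻¹ := fun h => hba.2 (by simp [h])
    rw [Set.ncard_insert_of_notMem, Set.ncard_insert_of_notMem, Set.ncard_pair (hne_inv b hb)]
    · simp [Ne.symm hba.1, Ne.symm hba.2]
    · simp [hne_inv a ha, ha_inv, Ne.symm hba.1]
  have heq := Set.eq_of_subset_of_ncard_le hsubset (by rw [hcount, hfour]) hfinite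
  exact ⟨a, b, ha, hb, hba.1, hba.2, fun g hg => heq.symm.subset hg⟩

theorem pow_four_eq_one_of_sq_eq_sq (hsq : ∀ a b : G, a ^ 2 ≠ 1 → b ^ 2 ≠ 1 → a ^ 2 = b ^ 2)
    (a : G) : a ^ 4 = 1 := by
  by_contra ha4
  have ha2 : a ^ 2 ≠ 1 := fun h => ha4 (by rw [pow_mul a 2 2, h, one_pow])
  have hpow : a ^ 2 * a ^ 2 = a ^ 2 := by
    rw [← sq]
    exact hsq (a ^ 2) a (by rwa [← pow_mul]) ha2
  exact ha2 (mul_eq_left.1 hpow)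

theorem mul_sq_eq_one_of_forall_eq {a b : G} (ha : a ^ 2 ≠ 1) (hb : b ^ 2 ≠ 1)
    (ha4 : a ^ 4 = 1) (hb4 : b ^ 4 = 1)
    (hN : ∀ g : G, g ^ 2 ≠ 1 → g = a ∨ g = a⁻¹ ∨ g = b ∨ g = b⁻¹) : (a * b) ^ 2 = 1 := by
  by_contra hab
  rcases hN _ hab with h | h | h | h
  · exact hb (by rw [mul_eq_left.1 h, one_pow])
  · have hb_eq : b = (a ^ 2)⁻¹ := by rw [eq_inv_mul_of_mul_eq h, sq, mul_inv_rev]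
    exact hb (by rw [hb_eq, inv_pow, ← pow_mul, ha4, inv_one])
  · exact ha (by rw [mul_eq_right.1 h, one_pow])
  · have ha_eq : a = (b ^ 2)⁻¹ := by rw [eq_mul_inv_of_mul_eq h, sq, mul_inv_rev]
    exact ha (by rw [ha_eq, inv_pow, ← pow_mul, hb4, inv_one])

theorem commute_of_mul_sq_eq_one {a b : G} (ha4 : a ^ 4 = 1) (hba : b ^ 2 = a ^ 2)
    (hab : (a * b) ^ 2 = 1) : Commute a b := by
  have hb4 : b ^ 4 = 1 := by rw [pow_mul b 2 2, hba, ← pow_mul, ha4]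
  calc a * b = b⁻¹ * a⁻¹ := by rw [← mul_inv_rev, inv_eq_self_of_sq_eq_one hab]
    _ = b * b ^ 2 * (a ^ 2 * a) := by
      rw [inv_eq_pow_three ha4, inv_eq_pow_three hb4, ← pow_succ', ← pow_succ]
    _ = b * a ^ 4 * a := by rw [hba, pow_mul a 2 2, sq (a ^ 2)]; simp only [mul_assoc]
    _ = b * a := by rw [ha4, mul_one]

theorem exists_orderOf_eq_four_and_involution (hcount : {g : G | g ^ 2 ≠ 1}.ncard = 4)
    (hsq : ∀ a b : G, a ^ 2 ≠ 1 → b ^ 2 ≠ 1 → a ^ 2 = b ^ 2) :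
    ∃ a u : G, orderOf a = 4 ∧ a ^ 2 ≠ 1 ∧ u ^ 2 = 1 ∧ u ∈ centralizer {a} ∧ u ∉ zpowers a ∧
      ∀ g, g ^ 2 ≠ 1 → g ∈ zpowers a ∨ u * g ∈ zpowers a := by
  have hpow := pow_four_eq_one_of_sq_eq_sq hsq
  obtain ⟨a, b, ha, hb, hba, hba_inv, hN⟩ := exists_pair_of_ncard_sq_ne_one_eq_four hcount
  have hab : (a * b) ^ 2 = 1 := mul_sq_eq_one_of_forall_eq ha hb (hpow a) (hpow b) hN
  have hcomm : Commute a b := commute_of_mul_sq_eq_one (hpow a) (hsq b a hb ha) hab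
  have horder : orderOf a = 2 ^ (1 + 1) := orderOf_eq_prime_pow (by simpa using ha) (hpow a)
  refine ⟨a, a * b, horder, ha, hab, ?_, fun h => ?_, fun g hg => ?_⟩
  · exact mem_centralizer_singleton_iff.2 ((Commute.refl a).mul_left hcomm.symm).eq
  · have hbmem : b ∈ zpowers a := (mul_mem_cancel_left (mem_zpowers a)).1 h
    rcases eq_of_mem_zpowers_of_pow_four_eq_one (hpow a) hbmem with h | h | h | h
    · exact hb (by rw [h, one_pow])
    · exact hba h
    · exact hba_inv h
    · exact hb (by rw [h, ← pow_mul, hpow])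
  · rcases hN g hg with rfl | rfl | rfl | rfl
    · exact .inl (mem_zpowers g)
    · exact .inl (inv_mem (mem_zpowers a))
    · rw [mul_assoc, ← sq, hsq g a hb ha]
      exact .inr (mul_mem (mem_zpowers a) (npow_mem_zpowers a 2))
    · rw [mul_inv_cancel_right]
      exact .inr (mem_zpowers a)

theorem nonempty_mulEquiv_of_ncard_sq_ne_one_eq_four (hcount : {g : G | g ^ 2 ≠ 1}.ncard = 4)
    (hsq : ∀ a b : G, a ^ 2 ≠ 1 → b ^ 2 ≠ 1 → a ^ 2 = b ^ 2) :
    Nonempty (G ≃* Multiplicative (ZMod 4 × ZMod 2)) ∨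
      Nonempty (G ≃* DihedralGroup 4 × Multiplicative (ZMod 2)) := by
  obtain ⟨a, u, ha, ha2, hu, hua, hu_notMem, hcover⟩ :=
    exists_orderOf_eq_four_and_involution hcount hsq
  exact (nonempty_mulEquiv_zmod_prod_or_dihedralGroup_prod ha ha2 hu hua hu_notMem hcover).imp_left
    fun ⟨e⟩ => ⟨e.trans (MulEquiv.prodMultiplicative _ _).symm⟩

end FourNonInvolutions

section Examples

variable {G : Type*} [Group G]

theorem card_eq_lambdaCover_add_congr {H : Type*} [Group H] (e : G ≃* H) {k : ℕ}
    (hH : Nat.card H = lambdaCover H + k) : Nat.card G = lambdaCover G + k := by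
  rw [Nat.card_congr e.toEquiv, lambdaCover_congr e, hH]

theorem lambdaCover_eq_one_of_isCyclic [IsCyclic G] : lambdaCover G = 1 := by
  have htop : IsCyclic (⊤ : Subgroup G) := inferInstance
  rw [lambdaCover, Nat.card_eq_one_iff_exists]
  exact ⟨⟨⊤, htop, fun K _ hK => (top_le_iff.1 hK).symm⟩,
    fun K => Subtype.ext (K.2.2 ⊤ htop le_top)⟩

theorem lambdaCover_dihedralGroup {n : ℕ} [NeZero n] (hn : n ≠ 1) :
    lambdaCover (DihedralGroup n) = n + 1 := by
  have hr : DihedralGroup.r (1 : ZMod n) ≠ 1 := by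
    rwa [Ne, ← orderOf_eq_one_iff, DihedralGroup.orderOf_r_one]
  have hsq : ∀ g ∉ zpowers (DihedralGroup.r (1 : ZMod n)), g ^ 2 = 1 := by
    rintro (i | i) hi
    · exact absurd ⟨i.val, by simp⟩ hi
    · rw [sq, DihedralGroup.sr_mul_self]
  have hcard := lambdaCover_add_orderOf hr hsq
  rw [DihedralGroup.orderOf_r_one, DihedralGroup.nat_card] at hcard
  omega

theorem card_eq_lambdaCover_add_four_of_pow_four_eq_one [Finite G] (hpow : ∀ g : G, g ^ 4 = 1)
    (hfour : {g : G | g ^ 2 ≠ 1}.ncard = 4) (hone : (squareInvolutions G).ncard = 1) :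
    Nat.card G = lambdaCover G + 4 := by
  have : Nontrivial G := by
    obtain ⟨g, hg⟩ : {g : G | g ^ 2 ≠ 1}.Nonempty := Set.nonempty_of_ncard_ne_zero (by omega)
    exact ⟨g, 1, by rintro rfl; simp at hg⟩
  have := two_mul_card_eq_lambdaCover_add fun g : G => .inr (hpow g)
  omega

theorem card_zmod_four_prod_zmod_two :
    Nat.card (Multiplicative (ZMod 4 × ZMod 2)) =
      lambdaCover (Multiplicative (ZMod 4 × ZMod 2)) + 4 := by
  apply card_eq_lambdaCover_add_four_of_pow_four_eq_one
  · decide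
  · rw [Set.ncard_eq_toFinset_card']
    decide
  · simp only [squareInvolutions, IsSquare, Set.ncard_eq_toFinset_card']
    decide

theorem card_dihedralGroup_four_prod_zmod_two :
    Nat.card (DihedralGroup 4 × Multiplicative (ZMod 2)) =
      lambdaCover (DihedralGroup 4 × Multiplicative (ZMod 2)) + 4 := by
  apply card_eq_lambdaCover_add_four_of_pow_four_eq_one
  · decide
  · rw [Set.ncard_eq_toFinset_card']
    decide
  · simp only [squareInvolutions, IsSquare, Set.ncard_eq_toFinset_card']
    decide

end Examples

theorem lambda_eq_card_sub_four_iff {G : Type*} [Group G] [Finite G] :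
    Nat.card G = lambdaCover G + 4 ↔
      (Nonempty (G ≃* Multiplicative (ZMod 5)) ∨
       Nonempty (G ≃* DihedralGroup 5) ∨
       Nonempty (G ≃* Multiplicative (ZMod 4 × ZMod 2)) ∨
       Nonempty (G ≃* DihedralGroup 4 × Multiplicative (ZMod 2))) := by
  constructor
  · intro hcard
    rcases exists_orderOf_eq_or_forall_orderOf_le hcard with ⟨x, hx, hsq⟩ | horder
    · have hx2 : x ^ 2 ≠ 1 := by rw [Ne, ← orderOf_dvd_iff_pow_eq_one, hx]; decide
      exact (nonempty_mulEquiv_zmod_or_dihedralGroup hx hx2 hsq).imp_right .inl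
    · obtain ⟨hfour, hsq⟩ := ncard_sq_ne_one_eq_four_and_sq_eq_sq hcard horder
      exact .inr (.inr (nonempty_mulEquiv_of_ncard_sq_ne_one_eq_four hfour hsq))
  · rintro (⟨⟨e⟩⟩ | ⟨⟨e⟩⟩ | ⟨⟨e⟩⟩ | ⟨⟨e⟩⟩) <;> apply card_eq_lambdaCover_add_congr e
    · rw [lambdaCover_eq_one_of_isCyclic, Nat.card_congr Multiplicative.toAdd, Nat.card_zmod]
    · rw [lambdaCover_dihedralGroup (by decide), DihedralGroup.nat_card]
    · exact card_zmod_four_prod_zmod_two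
    · exact card_dihedralGroup_four_prod_zmod_two
end

section
/- Let G be a finite group with λ(G) = |G| − 5 such that the maximum order of an element of G is 3. Then G is isomorphic to the alternating group A_4, to C_3 × C_3, or to the group ⟨a,b,c | a³ = b³ = c² = 1, aᶜ = a⁻¹, bᶜ = b⁻¹, ab = ba⟩ ≅ (C_3 × C_3) ⋊ C_2 (with C_2 acting by inversion). -/
/-!
When all orders are at most `3`, the maximal cyclic subgroups are those of order `2`, each with one
generator, and those of order `3`, each with two. Counting elements gives `|G| = λ(G) + c₃ + 1`,
where `c₃` is the number of subgroups of order `3`. So `c₃ = 4`, exactly `9` elements satisfy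
`g ^ 3 = 1`, and a Sylow `3`-subgroup `P` has order `3` or `9`.

If `|P| = 3`, there are four Sylow `3`-subgroups. The kernel of the conjugation action on them
normalizes `P` and meets it trivially, hence centralizes it. As all nontrivial elements have prime
order, the nontrivial elements of the kernel would then have order `3` and lie in `P`. So `G` embeds
in `S₄`. It has at least nine elements and none of order `4`, which leaves only `A₄`.

If `|P| = 9`, then `P = {g | g ^ 3 = 1}` and everything outside `P` is an involution. An involution
`c ∉ P` inverts `P`, since `c * z` is an involution for each `z ∈ P`. Two elements outside `P` have
their product in `P`, because that product centralizes `P`. Hence `P` has index at most `2`.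
-/

open Subgroup

lemma ncard_eq_sum_ncard_fiberwise {α β : Type*} {s : Set α} (hs : s.Finite) {f : α → β}
    {t : Finset β} (hf : Set.MapsTo f s t) :
    s.ncard = ∑ b ∈ t, {a ∈ s | f a = b}.ncard := by
  classical
  rw [Set.ncard_eq_toFinset_card s hs,
    Finset.card_eq_sum_card_fiberwise (f := f) (t := t) (by simpa using hf)]
  refine Finset.sum_congr rfl fun b _ ↦ ?_
  rw [← Set.ncard_coe_finset]
  simp

section CyclicSubgroups

variable {G : Type*} [Group G]

/-- The cyclic subgroups of `G` of cardinality `n`. Weighting them by `Nat.totient n` counts the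
elements of order `n`, and for the groups of interest they exhaust the maximal cyclic subgroups. -/
def cyclicSubgroupsOfCard (G : Type*) [Group G] (n : ℕ) : Set (Subgroup G) :=
  {H | IsCyclic H ∧ Nat.card H = n}

lemma zpowers_mem_cyclicSubgroupsOfCard (g : G) :
    zpowers g ∈ cyclicSubgroupsOfCard G (orderOf g) :=
  ⟨inferInstance, Nat.card_zpowers g⟩

variable [Finite G]

lemma card_eq_sum_ncard_orderOf {N : ℕ} (hN : ∀ g : G, orderOf g ≤ N) :
    Nat.card G = ∑ n ∈ Finset.Icc 1 N, {g : G | orderOf g = n}.ncard := by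
  have hf : Set.MapsTo orderOf (Set.univ : Set G) (Finset.Icc 1 N) := fun g _ ↦ by
    simpa using ⟨orderOf_pos g, hN g⟩
  simpa [Set.ncard_univ] using ncard_eq_sum_ncard_fiberwise Set.finite_univ hf

lemma ncard_zpowers_eq (H : Subgroup G) [IsCyclic H] :
    {g : G | zpowers g = H}.ncard = (Nat.card H).totient := by
  classical
  have := Fintype.ofFinite H
  have himage : {g : G | zpowers g = H} = H.subtype '' {h : H | orderOf h = Nat.card H} := by
    ext g
    constructor
    · rintro rfl
      exact ⟨⟨g, mem_zpowers g⟩, by simp [Nat.card_zpowers, -Nat.card_eq_fintype_card], rfl⟩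
    · rintro ⟨h, hh, rfl⟩
      refine eq_of_le_of_card_ge (by simp) ?_
      simpa using hh.ge
  rw [himage, Set.ncard_image_of_injective _ H.subtype_injective, Nat.card_eq_fintype_card,
    ← IsCyclic.card_orderOf_eq_totient dvd_rfl, ← Set.ncard_coe_finset]
  simp

lemma ncard_orderOf_eq_mul_totient (n : ℕ) :
    {g : G | orderOf g = n}.ncard = (cyclicSubgroupsOfCard G n).ncard * n.totient := by
  have hfin := (cyclicSubgroupsOfCard G n).toFinite
  have hf : Set.MapsTo zpowers {g : G | orderOf g = n} hfin.toFinset := by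
    rintro g rfl
    simpa using zpowers_mem_cyclicSubgroupsOfCard g
  rw [ncard_eq_sum_ncard_fiberwise (Set.toFinite _) hf, Set.ncard_eq_toFinset_card _ hfin]
  refine Finset.sum_const_nat fun H hH ↦ ?_
  obtain ⟨_, rfl⟩ : H ∈ cyclicSubgroupsOfCard G n := by simpa using hH
  rw [← ncard_zpowers_eq H]
  congr 1
  ext g
  simp only [Set.mem_ofPred_eq, and_iff_right_iff_imp]
  rintro rfl
  exact (Nat.card_zpowers g).symm

variable {p : ℕ} [hp : Fact p.Prime]

lemma ncard_pow_prime_eq_one :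
    {g : G | g ^ p = 1}.ncard = (cyclicSubgroupsOfCard G p).ncard * (p - 1) + 1 := by
  have hinsert : {g : G | g ^ p = 1} = insert 1 {g : G | orderOf g = p} := by
    ext g
    rcases eq_or_ne g 1 with rfl | hg
    · simp
    · simp [hg, orderOf_eq_prime_iff]
  rw [hinsert, Set.ncard_insert_of_notMem (by simpa using hp.out.ne_one.symm),
    ncard_orderOf_eq_mul_totient, Nat.totient_prime hp.out]

lemma ncard_pow_prime_eq_one_of_ncard_eq_succ
    (hc : (cyclicSubgroupsOfCard G p).ncard = p + 1) : {g : G | g ^ p = 1}.ncard = p ^ 2 := by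
  obtain ⟨n, rfl⟩ := Nat.exists_eq_add_of_le' hp.out.one_le
  rw [ncard_pow_prime_eq_one, hc, Nat.add_sub_cancel]
  ring

end CyclicSubgroups

/-- A group in which every nontrivial element has prime order, called an EPO-group in the
literature. The maximal cyclic subgroups of such a group are its nontrivial cyclic subgroups. -/
def IsEPO (G : Type*) [Group G] : Prop :=
  ∀ g : G, g ≠ 1 → (orderOf g).Prime

namespace IsEPO

variable {G : Type*} [Group G]

lemma of_orderOf_le_three [Finite G] (hle : ∀ g : G, orderOf g ≤ 3) : IsEPO G := by
  intro g hg
  have hpos := orderOf_pos g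
  have hle := hle g
  have hne : orderOf g ≠ 1 := by rwa [ne_eq, orderOf_eq_one_iff]
  interval_cases orderOf g <;> first | contradiction | norm_num

lemma isMaximalCyclic_iff [Nontrivial G] (hG : IsEPO G) {H : Subgroup G} :
    IsMaximalCyclic H ↔ IsCyclic H ∧ H ≠ ⊥ := by
  refine and_congr_right fun _ ↦ ⟨?_, fun hH K hK hHK ↦ hHK.antisymm ?_⟩
  · rintro hmax rfl
    obtain ⟨g, hg⟩ := exists_ne (1 : G)
    exact hg (zpowers_eq_bot.1 (hmax (zpowers g) inferInstance bot_le).symm)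
  · obtain ⟨k, rfl⟩ := (Subgroup.isCyclic_iff_exists_zpowers_eq_top K).1 hK
    have hk : k ≠ 1 := by
      rintro rfl
      simp_all
    have : Fact (Nat.card (zpowers k)).Prime := ⟨by simpa using hG k hk⟩
    rcases (H.subgroupOf (zpowers k)).eq_bot_or_eq_top_of_prime_card with h | h
    · exact absurd (by rwa [subgroupOf_eq_bot, disjoint_of_le_iff_left_eq_bot hHK] at h) hH
    · exact subgroupOf_eq_top.1 h

lemma lambdaCover_eq_sum [Finite G] [Nontrivial G] (hG : IsEPO G) {N : ℕ}
    (hN : ∀ g : G, orderOf g ≤ N) :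
    lambdaCover G = ∑ n ∈ Finset.Icc 2 N, (cyclicSubgroupsOfCard G n).ncard := by
  have hf : Set.MapsTo (fun H : Subgroup G ↦ Nat.card H) {H | IsMaximalCyclic H}
      (Finset.Icc 2 N) := by
    intro H hH
    obtain ⟨hcyc, hbot⟩ := hG.isMaximalCyclic_iff.1 hH
    obtain ⟨g, rfl⟩ := (Subgroup.isCyclic_iff_exists_zpowers_eq_top H).1 hcyc
    exact Finset.mem_coe.2 (Finset.mem_Icc.2
      ⟨(one_lt_card_iff_ne_bot _).2 hbot, (Nat.card_zpowers g).trans_le (hN g)⟩)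
  refine (ncard_eq_sum_ncard_fiberwise (Set.toFinite _) hf).trans
    (Finset.sum_congr rfl fun n hn ↦ ?_)
  congr 1
  ext H
  simp only [Set.mem_ofPred_eq, hG.isMaximalCyclic_iff, cyclicSubgroupsOfCard]
  refine ⟨fun ⟨⟨hcyc, _⟩, hcard⟩ ↦ ⟨hcyc, hcard⟩, fun ⟨hcyc, hcard⟩ ↦ ⟨⟨hcyc, ?_⟩, hcard⟩⟩
  rw [← one_lt_card_iff_ne_bot, hcard]
  exact (Finset.mem_Icc.1 hn).1

lemma pow_eq_one_of_isPGroup (hG : IsEPO G) {p : ℕ} [Fact p.Prime] {P : Subgroup G}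
    (hP : IsPGroup p P) {x : G} (hx : x ∈ P) : x ^ p = 1 := by
  obtain ⟨n, hn⟩ := hP ⟨x, hx⟩
  rcases eq_or_ne x 1 with rfl | hx1
  · exact one_pow p
  have hdvd : orderOf x ∣ p ^ n := orderOf_dvd_of_pow_eq_one (congrArg Subtype.val hn)
  rw [← Nat.prime_eq_prime_of_dvd_pow (hG x hx1) Fact.out hdvd, pow_orderOf_eq_one]

lemma pow_eq_one_of_commute (hG : IsEPO G) {x g : G} (hx : x ≠ 1) (hxg : Commute x g) :
    g ^ orderOf x = 1 := by
  rcases eq_or_ne g 1 with rfl | hg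
  · exact one_pow _
  by_contra hpow
  have hcop : (orderOf x).Coprime (orderOf g) := by
    rw [Nat.coprime_primes (hG x hx) (hG g hg)]
    intro heq
    exact hpow (heq ▸ pow_orderOf_eq_one g)
  have hmul := hxg.orderOf_mul_eq_mul_orderOf_of_coprime hcop
  have hxg1 : x * g ≠ 1 := by
    rw [ne_eq, ← orderOf_eq_one_iff, hmul, mul_eq_one]
    exact fun h ↦ (hG x hx).ne_one h.1
  exact Nat.not_prime_mul (hG x hx).ne_one (hG g hg).ne_one (hmul ▸ hG _ hxg1)

end IsEPO

section Sylow

variable {G : Type*} [Group G] {p : ℕ}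

lemma ncard_cyclicSubgroupsOfCard_sylow [Finite G] [Fact p.Prime] (P : Sylow p G) [IsCyclic P] :
    (cyclicSubgroupsOfCard G (Nat.card P)).ncard = Nat.card (Sylow p G) := by
  have hrange : cyclicSubgroupsOfCard G (Nat.card P) =
      Set.range fun Q : Sylow p G ↦ (Q : Subgroup G) := by
    ext H
    constructor
    · rintro ⟨_, hcard⟩
      exact ⟨Sylow.ofCard H (hcard.trans P.card_eq_multiplicity), rfl⟩
    · rintro ⟨Q, rfl⟩
      have e : P ≃* Q := P.equiv Q
      exact ⟨isCyclic_of_surjective e e.surjective, (Nat.card_congr e.toEquiv).symm⟩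
  rw [hrange, ← Set.image_univ, Set.ncard_image_of_injective _ fun _ _ h ↦ Sylow.ext h,
    Set.ncard_univ]

lemma mem_ker_toPermHom_sylow_iff {k : G} :
    k ∈ (MulAction.toPermHom G (Sylow p G)).ker ↔ ∀ Q : Sylow p G, k ∈ normalizer (Q : Set G) := by
  simp [MonoidHom.mem_ker, Equiv.ext_iff, Sylow.smul_eq_iff_mem_normalizer]

lemma disjoint_ker_toPermHom_sylow [Fact p.Prime] [Nontrivial (Sylow p G)] {P : Sylow p G}
    (hP : Nat.card P = p) :
    Disjoint (MulAction.toPermHom G (Sylow p G)).ker (P : Subgroup G) := by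
  set K := (MulAction.toPermHom G (Sylow p G)).ker
  have : Fact (Nat.card (P : Subgroup G)).Prime := ⟨hP.symm ▸ Fact.out⟩
  rcases (K.subgroupOf P).eq_bot_or_eq_top_of_prime_card with h | h
  · exact subgroupOf_eq_bot.1 h
  · obtain ⟨Q, hQ⟩ := exists_ne P
    have hPQ : (P : Subgroup G) ≤ normalizer (Q : Set G) := fun x hx ↦
      mem_ker_toPermHom_sylow_iff.1 (subgroupOf_eq_top.1 h hx) Q
    rw [← inf_eq_left, P.isPGroup'.inf_normalizer_sylow, inf_eq_left] at hPQ
    exact absurd (Sylow.ext (P.is_maximal' Q.isPGroup' hPQ)) hQ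

lemma le_centralizer_of_le_normalizer_of_disjoint {K H : Subgroup G} [K.Normal]
    (hKH : K ≤ normalizer (H : Set G)) (hdisj : Disjoint K H) : K ≤ centralizer (H : Set G) := by
  rw [← commutator_eq_bot_iff_le_centralizer, eq_bot_iff]
  exact (le_inf (commutator_le_left K H)
    (le_normalizer_iff_commutator_le_right.1 hKH)).trans hdisj.le_bot

lemma isPGroup_zpowers_of_pow_eq_one [hp : Fact p.Prime] {g : G} {n : ℕ} (hg : g ^ p ^ n = 1) :
    IsPGroup p (zpowers g) := by
  obtain ⟨m, -, hm⟩ := (Nat.dvd_prime_pow hp.out).1 (orderOf_dvd_of_pow_eq_one hg)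
  exact IsPGroup.of_card ((Nat.card_zpowers g).trans hm)

lemma IsEPO.toPermHom_sylow_injective (hG : IsEPO G) [Fact p.Prime] [Nontrivial (Sylow p G)]
    {P : Sylow p G} (hP : Nat.card P = p) :
    Function.Injective (MulAction.toPermHom G (Sylow p G)) := by
  rw [← MonoidHom.ker_eq_bot_iff, eq_bot_iff]
  set K := (MulAction.toPermHom G (Sylow p G)).ker
  have hdisj : Disjoint K (P : Subgroup G) := disjoint_ker_toPermHom_sylow hP
  have hnorm : K ≤ normalizer (P : Set G) := fun k hk ↦ mem_ker_toPermHom_sylow_iff.1 hk P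
  intro k hk
  have : Finite P := Nat.finite_of_card_ne_zero (hP.symm ▸ (Fact.out : p.Prime).ne_zero)
  obtain ⟨x, hx⟩ := exists_prime_orderOf_dvd_card' (G := P) p hP.symm.dvd
  have hcomm : Commute (x : G) k :=
    le_centralizer_of_le_normalizer_of_disjoint hnorm hdisj hk x x.2
  have hkpow : k ^ p = 1 := by
    rw [← hx, ← orderOf_coe]
    refine hG.pow_eq_one_of_commute ?_ hcomm
    rw [ne_eq, ← orderOf_eq_one_iff, orderOf_coe, hx]
    exact (Fact.out : p.Prime).ne_one
  have hkp : IsPGroup p (zpowers k) :=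
    isPGroup_zpowers_of_pow_eq_one (n := 1) (by rwa [pow_one])
  have hkP : zpowers k ≤ P := by
    rw [← inf_eq_left, ← hkp.inf_normalizer_sylow, inf_eq_left, zpowers_le]
    exact hnorm hk
  exact hdisj.le_bot ⟨hk, hkP (mem_zpowers k)⟩

end Sylow

namespace IsEPO

variable {G : Type*} [Group G] {p : ℕ} [hp : Fact p.Prime]

lemma coe_sylow_subset_setOf_pow_eq_one (hG : IsEPO G) (P : Sylow p G) :
    (P : Set G) ⊆ {g | g ^ p = 1} :=
  fun _ ↦ hG.pow_eq_one_of_isPGroup P.isPGroup'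

variable [Finite G]

lemma card_sylow_eq_prime_or_sq (hG : IsEPO G) (hc : (cyclicSubgroupsOfCard G p).ncard = p + 1)
    (P : Sylow p G) : Nat.card P = p ∨ Nat.card P = p ^ 2 := by
  obtain ⟨n, hn⟩ := IsPGroup.iff_card.1 P.isPGroup'
  have hle : p ^ n ≤ p ^ 2 := by
    rw [← hn, ← ncard_pow_prime_eq_one_of_ncard_eq_succ hc]
    exact Set.ncard_le_ncard (hG.coe_sylow_subset_setOf_pow_eq_one P)
  have hdvd : p ∣ Nat.card P := by
    obtain ⟨H, -, hH⟩ := Set.nonempty_of_ncard_ne_zero (hc.trans_ne p.succ_ne_zero)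
    exact P.dvd_card_of_dvd_card (hH ▸ H.card_subgroup_dvd_card)
  have hn2 : n ≤ 2 := (Nat.pow_le_pow_iff_right hp.out.one_lt).1 hle
  have hn0 : n ≠ 0 := by
    rintro rfl
    rw [hn, pow_zero] at hdvd
    exact hp.out.not_dvd_one hdvd
  interval_cases n <;> simp_all

lemma coe_sylow_eq_setOf_pow_eq_one (hG : IsEPO G) (hc : (cyclicSubgroupsOfCard G p).ncard = p + 1)
    {P : Sylow p G} (hP : Nat.card P = p ^ 2) : (P : Set G) = {g | g ^ p = 1} :=
  Set.eq_of_subset_of_ncard_le (hG.coe_sylow_subset_setOf_pow_eq_one P) <| by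
    rw [ncard_pow_prime_eq_one_of_ncard_eq_succ hc, ← hP]
    rfl

end IsEPO

section GeneralizedDihedral

variable {G : Type*} [Group G] {H : Subgroup G}

lemma conj_eq_inv_of_sq_eq_one (hH : ∀ g ∉ H, g ^ 2 = 1) {c z : G} (hc : c ∉ H) (hz : z ∈ H) :
    c⁻¹ * z * c = z⁻¹ := by
  have hcinv : c⁻¹ = c := inv_eq_of_mul_eq_one_left (by rw [← sq, hH c hc])
  have hcz : (c * z) ^ 2 = 1 := hH _ fun h ↦ hc ((H.mul_mem_cancel_right hz).1 h)
  rw [hcinv, eq_inv_iff_mul_eq_one, ← hcz, sq, ← mul_assoc]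

-- Otherwise `g * c` would both invert and centralize `z`.
lemma mul_mem_of_sq_eq_one (hH : ∀ g ∉ H, g ^ 2 = 1) {z : G} (hz : z ∈ H) (hz2 : z ^ 2 ≠ 1)
    {g c : G} (hg : g ∉ H) (hc : c ∉ H) : g * c ∈ H := by
  by_contra hgc
  have hinv : z⁻¹ = z := calc
    z⁻¹ = (g * c)⁻¹ * z * (g * c) := (conj_eq_inv_of_sq_eq_one hH hgc hz).symm
    _ = c⁻¹ * (g⁻¹ * z * g) * c := by group
    _ = z := by
      rw [conj_eq_inv_of_sq_eq_one hH hg hz, conj_eq_inv_of_sq_eq_one hH hc (inv_mem hz), inv_inv]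
  exact hz2 (by rw [sq, ← inv_eq_iff_mul_eq_one, hinv])

lemma index_eq_two_of_sq_eq_one (hH : ∀ g ∉ H, g ^ 2 = 1) {z : G} (hz : z ∈ H) (hz2 : z ^ 2 ≠ 1)
    {c : G} (hc : c ∉ H) : H.index = 2 := by
  refine index_eq_two_iff.2 ⟨c, fun g ↦ ?_⟩
  by_cases hg : g ∈ H
  · exact Or.inr ⟨hg, fun h ↦ hc ((H.mul_mem_cancel_left hg).1 h)⟩
  · exact Or.inl ⟨mul_mem_of_sq_eq_one hH hz hz2 hg hc, hg⟩

end GeneralizedDihedral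

section PrimeIndex

variable {G : Type*} [Group G]

lemma isCoatom_of_index_prime {H : Subgroup G} (hH : H.index.Prime) : IsCoatom H := by
  have : H.FiniteIndex := ⟨hH.ne_zero⟩
  refine ⟨fun htop ↦ hH.ne_one (index_eq_one.2 htop), fun K hHK ↦ index_eq_one.1 ?_⟩
  exact (hH.eq_one_or_self_of_dvd _ (index_dvd_of_le hHK.le)).resolve_right
    (index_strictAnti hHK).ne

lemma closure_insert_eq_top_of_index_prime {s : Set G} (hs : (closure s).index.Prime) {c : G}
    (hc : c ∉ closure s) : closure (insert c s) = ⊤ :=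
  (isCoatom_of_index_prime hs).2 _ <| SetLike.lt_iff_le_and_exists.2
    ⟨closure_mono (Set.subset_insert c s), c, subset_closure (Set.mem_insert c s), hc⟩

end PrimeIndex

lemma nonempty_linearEquiv_prod_of_card_eq_sq {K V : Type*} [DivisionRing K] [Finite K]
    [AddCommGroup V] [Module K V] (hV : Nat.card V = Nat.card K ^ 2) :
    Nonempty (V ≃ₗ[K] K × K) := by
  have : Finite V := Nat.finite_of_card_ne_zero (hV ▸ pow_ne_zero 2 Nat.card_pos.ne')
  have hrank : Module.finrank K V = 2 := by
    rw [Module.natCard_eq_pow_finrank (K := K)] at hV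
    exact Nat.pow_right_injective Finite.one_lt_card hV
  exact FiniteDimensional.nonempty_linearEquiv_of_finrank_eq (by simp [hrank])

section PrimeSquare

variable {p : ℕ} [hp : Fact p.Prime]

lemma exists_closure_pair_eq_top_of_card_eq_prime_sq {G : Type*} [Group G]
    (hG : Nat.card G = p ^ 2) : ∃ a b : G, closure {a, b} = ⊤ := by
  have : Finite G := Nat.finite_of_card_ne_zero (hG ▸ pow_ne_zero 2 hp.out.ne_zero)
  obtain ⟨b, hb⟩ := exists_prime_orderOf_dvd_card' (G := G) p (hG ▸ dvd_pow_self p two_ne_zero)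
  have hindex : (closure {b}).index = p := by
    apply Nat.eq_of_mul_eq_mul_left hp.out.pos
    rw [← zpowers_eq_closure, ← sq, ← hG, ← card_mul_index (zpowers b), Nat.card_zpowers, hb]
  have hprime : (closure {b}).index.Prime := hindex ▸ hp.out
  obtain ⟨a, -, ha⟩ := SetLike.exists_of_lt (isCoatom_of_index_prime hprime).lt_top
  exact ⟨a, b, closure_insert_eq_top_of_index_prime hprime ha⟩

lemma exists_closure_pair_eq_of_card_eq_prime_sq {G : Type*} [Group G] {H : Subgroup G}
    (hH : Nat.card H = p ^ 2) : ∃ a b : G, closure {a, b} = H := by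
  obtain ⟨a, b, hab⟩ := exists_closure_pair_eq_top_of_card_eq_prime_sq hH
  have hmap := congrArg (map H.subtype) hab
  rw [MonoidHom.map_closure, Set.image_pair, ← MonoidHom.range_eq_map, H.range_subtype] at hmap
  exact ⟨a, b, hmap⟩

lemma nonempty_mulEquiv_zmod_prod_zmod_of_card_eq_prime_sq {G : Type*} [Group G]
    (hG : Nat.card G = p ^ 2) (hpow : ∀ g : G, g ^ p = 1) :
    Nonempty (G ≃* Multiplicative (ZMod p × ZMod p)) := by
  let _ : CommGroup G := IsPGroup.commGroupOfCardEqPrimeSq hG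
  let _ : Module (ZMod p) (Additive G) := AddCommGroup.zmodModule hpow
  have hcard : Nat.card (Additive G) = Nat.card (ZMod p) ^ 2 := by rwa [Nat.card_zmod]
  obtain ⟨e⟩ := nonempty_linearEquiv_prod_of_card_eq_sq hcard
  exact ⟨AddEquiv.toMultiplicativeRight e.toAddEquiv⟩

variable {G : Type*} [Group G]

lemma exists_sq_ne_one_of_prime_dvd_card [Finite G] (hp2 : p ≠ 2) (hG : p ∣ Nat.card G) :
    ∃ z : G, z ^ 2 ≠ 1 := by
  obtain ⟨z, hz⟩ := exists_prime_orderOf_dvd_card' p hG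
  refine ⟨z, fun hz2 ↦ hp2 ?_⟩
  exact (Nat.prime_dvd_prime_iff_eq hp.out Nat.prime_two).1 (hz ▸ orderOf_dvd_of_pow_eq_one hz2)

lemma exists_generalizedDihedral_generators_of_card_eq_prime_sq {H : Subgroup G} (hp2 : p ≠ 2)
    (hcard : Nat.card H = p ^ 2) (hpow : ∀ h ∈ H, h ^ p = 1) (hsq : ∀ g ∉ H, g ^ 2 = 1)
    (hH : H ≠ ⊤) :
    ∃ a b c : G, a ^ p = 1 ∧ b ^ p = 1 ∧ c ^ 2 = 1 ∧ c⁻¹ * a * c = a⁻¹ ∧ c⁻¹ * b * c = b⁻¹ ∧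
      a * b = b * a ∧ closure {a, b, c} = ⊤ ∧ Nat.card G = p ^ 2 * 2 := by
  obtain ⟨a, b, rfl⟩ := exists_closure_pair_eq_of_card_eq_prime_sq hcard
  obtain ⟨c, -, hc⟩ := SetLike.exists_of_lt hH.lt_top
  have ha : a ∈ closure {a, b} := subset_closure (by simp)
  have hb : b ∈ closure {a, b} := subset_closure (by simp)
  have hindex : (closure {a, b}).index = 2 := by
    have : Finite (closure {a, b}) :=
      Nat.finite_of_card_ne_zero (hcard ▸ pow_ne_zero 2 hp.out.ne_zero)
    obtain ⟨⟨z, hz⟩, hz2⟩ :=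
      exists_sq_ne_one_of_prime_dvd_card hp2 (hcard ▸ dvd_pow_self p two_ne_zero)
    exact index_eq_two_of_sq_eq_one hsq hz (fun h ↦ hz2 (Subtype.ext h)) hc
  have hab : a * b = b * a := by
    have := IsPGroup.isMulCommutative_of_card_eq_prime_sq hcard
    exact setLike_mul_comm ha hb
  refine ⟨a, b, c, hpow a ha, hpow b hb, hsq c hc, conj_eq_inv_of_sq_eq_one hsq hc ha,
    conj_eq_inv_of_sq_eq_one hsq hc hb, hab, ?_, ?_⟩
  · rw [Set.pair_comm b c, Set.insert_comm]
    exact closure_insert_eq_top_of_index_prime (hindex ▸ Nat.prime_two) hc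
  · rw [← card_mul_index (closure {a, b}), hcard, hindex]

end PrimeSquare

section AlternatingGroup

variable {G : Type*} [Group G]

lemma range_index_eq_two_of_injective {f : G →* Equiv.Perm (Fin 4)} (hf : Function.Injective f)
    (hcard : 8 < Nat.card G) (hord : ∀ g : G, orderOf g ≠ 4) : f.range.index = 2 := by
  have hmul : Nat.card G * f.range.index = 24 := by
    rw [Nat.card_congr (MonoidHom.ofInjective hf).toEquiv, card_mul_index, Nat.card_perm,
      Nat.card_fin]
    rfl
  have hne : f.range.index ≠ 1 := by
    rw [ne_eq, index_eq_one]
    intro htop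
    obtain ⟨g, hg⟩ := MonoidHom.range_eq_top.1 htop (finRotate 4)
    apply hord g
    rw [← orderOf_injective f hf, hg, isCycle_finRotate.orderOf, support_finRotate,
      Finset.card_univ, Fintype.card_fin]
  have hle : f.range.index < 3 := by nlinarith
  interval_cases f.range.index <;> omega

lemma nonempty_mulEquiv_alternatingGroup_of_injective {α : Type*} (hα : Nat.card α = 4)
    {f : G →* Equiv.Perm α} (hf : Function.Injective f) (hcard : 8 < Nat.card G)
    (hord : ∀ g : G, orderOf g ≠ 4) : Nonempty (G ≃* alternatingGroup (Fin 4)) := by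
  have : Finite α := Nat.finite_of_card_ne_zero (by omega)
  let e : Equiv.Perm α ≃* Equiv.Perm (Fin 4) := (Finite.equivFinOfCardEq hα).permCongrHom
  have hinj : Function.Injective (e.toMonoidHom.comp f) := e.injective.comp hf
  have hindex := range_index_eq_two_of_injective hinj hcard hord
  exact ⟨(MonoidHom.ofInjective hinj).trans
    (MulEquiv.subgroupCongr (Equiv.Perm.eq_alternatingGroup_of_index_eq_two hindex))⟩

end AlternatingGroup

section OrdersAtMostThree

variable {G : Type*} [Group G] [Finite G]

lemma card_eq_lambdaCover_add_of_orderOf_le_three [Nontrivial G] (hle : ∀ g : G, orderOf g ≤ 3) :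
    Nat.card G = lambdaCover G + (cyclicSubgroupsOfCard G 3).ncard + 1 := by
  rw [card_eq_sum_ncard_orderOf hle, (IsEPO.of_orderOf_le_three hle).lambdaCover_eq_sum hle]
  have htriv : {g : G | orderOf g = 1}.ncard = 1 := by simp
  simp only [Finset.sum_Icc_succ_top, Nat.one_le_ofNat, Nat.reduceLeDiff, Nat.reduceAdd,
    Finset.Icc_self, Finset.sum_singleton, htriv, ncard_orderOf_eq_mul_totient 2,
    ncard_orderOf_eq_mul_totient 3, Nat.totient_prime Nat.prime_two,
    Nat.totient_prime Nat.prime_three]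
  ring

lemma sq_eq_one_of_orderOf_le_three (hle : ∀ g : G, orderOf g ≤ 3) {g : G} (hg : g ^ 3 ≠ 1) :
    g ^ 2 = 1 := by
  have hpos := orderOf_pos g
  have hle := hle g
  have hpow := pow_orderOf_eq_one g
  interval_cases orderOf g <;> simp_all

lemma nonempty_mulEquiv_alternatingGroup_of_card_sylow_eq_three (hle : ∀ g : G, orderOf g ≤ 3)
    (hc : (cyclicSubgroupsOfCard G 3).ncard = 4) {P : Sylow 3 G} (hP : Nat.card P = 3) :
    Nonempty (G ≃* alternatingGroup (Fin 4)) := by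
  have : IsCyclic P := isCyclic_of_prime_card hP
  have hsylow : Nat.card (Sylow 3 G) = 4 := by
    rw [← ncard_cyclicSubgroupsOfCard_sylow P, hP, hc]
  have : Nontrivial (Sylow 3 G) := Finite.one_lt_card_iff_nontrivial.1 (by omega)
  have hcard : 8 < Nat.card G := calc
    8 < {g : G | g ^ 3 = 1}.ncard := by simp [ncard_pow_prime_eq_one_of_ncard_eq_succ hc]
    _ ≤ Nat.card G := Set.ncard_le_card _
  exact nonempty_mulEquiv_alternatingGroup_of_injective hsylow
    ((IsEPO.of_orderOf_le_three hle).toPermHom_sylow_injective hP) hcard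
    fun g ↦ ((hle g).trans_lt (by norm_num)).ne

end OrdersAtMostThree

theorem lambda_eq_card_sub_five_max_order_three {G : Type*} [Group G] [Finite G]
    (h : Nat.card G = lambdaCover G + 5)
    (h3 : IsGreatest {n | ∃ g : G, orderOf g = n} 3) :
    Nonempty (G ≃* alternatingGroup (Fin 4)) ∨
    Nonempty (G ≃* Multiplicative (ZMod 3 × ZMod 3)) ∨
    (∃ a b c : G, a ^ 3 = 1 ∧ b ^ 3 = 1 ∧ c ^ 2 = 1 ∧
      c⁻¹ * a * c = a⁻¹ ∧ c⁻¹ * b * c = b⁻¹ ∧ a * b = b * a ∧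
      Subgroup.closure {a, b, c} = ⊤ ∧ Nat.card G = 18) := by
  have hle (g : G) : orderOf g ≤ 3 := h3.2 ⟨g, rfl⟩
  have hG : IsEPO G := .of_orderOf_le_three hle
  obtain ⟨x, hx⟩ := h3.1
  have : Nontrivial G := ⟨x, 1, fun hx1 ↦ by simp [hx1] at hx⟩
  have hc : (cyclicSubgroupsOfCard G 3).ncard = 4 := by
    have := card_eq_lambdaCover_add_of_orderOf_le_three hle
    omega
  let P : Sylow 3 G := default
  rcases hG.card_sylow_eq_prime_or_sq hc P with hP | hP
  · exact Or.inl (nonempty_mulEquiv_alternatingGroup_of_card_sylow_eq_three hle hc hP)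
  have hmem (g : G) : g ∈ (P : Subgroup G) ↔ g ^ 3 = 1 :=
    Set.ext_iff.1 (hG.coe_sylow_eq_setOf_pow_eq_one hc hP) g
  right
  by_cases htop : (P : Subgroup G) = ⊤
  · left
    exact nonempty_mulEquiv_zmod_prod_zmod_of_card_eq_prime_sq (by rw [← hP, htop, card_top])
      fun g ↦ (hmem g).1 (htop ▸ mem_top g)
  · right
    exact exists_generalizedDihedral_generators_of_card_eq_prime_sq (by norm_num) hP
      (fun g ↦ (hmem g).1) (fun g hg ↦ sq_eq_one_of_orderOf_le_three hle (mt (hmem g).2 hg)) htop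
end

section
/- Let G be a finite group with λ(G) = |G| − 5 such that the maximum order of an element of G is 4. Then G is isomorphic to the quaternion group Q_8 of order 8. -/
/-!
A maximal cyclic subgroup of order `n` has `φ(n)` generators, so weighting each element of `G` by
`1 / φ(order)` when it generates a maximal cyclic subgroup, and by `0` otherwise, gives total weight
`λ(G)`. If all orders are at most `4`, the weight falls short of `1` by `1` at the identity and at
the `s` involutions that are squares of elements of order `4`, and by `1 / 2` at the `n₃ + n₄`
elements of order `3` or `4`. Hence `|G| - λ(G) = 5` reads `2 * s + n₃ + n₄ = 8`.

Each such involution has at least two square roots, so `s ≤ 2`. If `s = 2`, say with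
`x ^ 2 ≠ y ^ 2`, then `x` commutes with `y ^ 2`, and `x * y ^ 2` is a further element of order `4`,
too many for the count. So `s = 1`, the unique such involution `z` is central, an element of order
`3` would yield one of order `6`, and therefore `n₄ = 6`.

Now every square is `1` or `z`, and `z` has exactly six square roots. Let `x` be one of them and `C`
its centralizer. Multiplication by `x` exchanges the square roots of `z` in `C` with the rest of
`C`, so if all six lay in `C` then `|C| = 12`, which is impossible without elements of order `3`. A
root `v` outside `C` inverts `x`, and the coset of `v` modulo the powers of `x` consists of four
roots outside `C`. This leaves two roots in `C`, so `|C| = 4`, `|G| = 8`, and `x`, `v` satisfy the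
defining relations of the quaternion group.
-/

open Finset Subgroup

section QuaternionLift

variable {G : Type*} [Group G] {x y : G}

/-- The homomorphism `ℤ/m → G`, `k ↦ x ^ k`, attached to an element `x` with `x ^ m = 1`. -/
def zmodPowersHom {m : ℕ} (x : G) (hx : x ^ m = 1) : Multiplicative (ZMod m) →* G :=
  AddMonoidHom.toMultiplicativeLeft
    (ZMod.lift m ⟨zmultiplesHom (Additive G) (.ofMul x), by simpa using congrArg Additive.ofMul hx⟩)

lemma zmodPowersHom_ofAdd_intCast {m : ℕ} (hx : x ^ m = 1) (k : ℤ) :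
    zmodPowersHom x hx (.ofAdd (k : ZMod m)) = x ^ k := by
  simp [zmodPowersHom]

/-- The homomorphism out of the generalized quaternion group of order `4 * n` sending its standard
generators `a 1` and `xa 0` to elements `x` and `y` that satisfy the same relations. -/
def quaternionGroupLift {n : ℕ} (hx : x ^ (2 * n) = 1) (hy : y ^ 2 = x ^ n)
    (hxy : SemiconjBy y x⁻¹ x) : QuaternionGroup n →* G where
  toFun
    | .a i => zmodPowersHom x hx (.ofAdd i)
    | .xa i => y * zmodPowersHom x hx (.ofAdd i)
  map_one' := map_one (zmodPowersHom x hx)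
  map_mul' := by
    have move (k : ℤ) : x ^ k * y = y * x ^ (-k) := by
      simpa using (hxy.zpow_right k).eq.symm
    have hn : x ^ (n : ℤ) = y * y := by rw [zpow_natCast, ← hy, sq]
    rintro (i | i) (j | j) <;>
      obtain ⟨k, rfl⟩ := ZMod.intCast_surjective i <;>
      obtain ⟨l, rfl⟩ := ZMod.intCast_surjective j
    · simp only [QuaternionGroup.a_mul_a, ← Int.cast_add, zmodPowersHom_ofAdd_intCast, zpow_add]
    · simp only [QuaternionGroup.a_mul_xa, ← Int.cast_sub, zmodPowersHom_ofAdd_intCast]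
      rw [← mul_assoc, move, mul_assoc, ← zpow_add, neg_add_eq_sub]
    · simp only [QuaternionGroup.xa_mul_a, ← Int.cast_add, zmodPowersHom_ofAdd_intCast, zpow_add,
        mul_assoc]
    · simp only [QuaternionGroup.xa_mul_xa, ← Int.cast_natCast (R := ZMod (2 * n)),
        ← Int.cast_add, ← Int.cast_sub, zmodPowersHom_ofAdd_intCast]
      rw [mul_assoc y, ← mul_assoc _ y, move, mul_assoc y, ← mul_assoc y, ← zpow_add, ← hn,
        ← zpow_add, neg_add_eq_sub, add_sub_assoc]

lemma quaternionGroupLift_injective {n : ℕ} (hx : orderOf x = 2 * n) (hy : y ^ 2 = x ^ n)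
    (hxy : SemiconjBy y x⁻¹ x) (hmem : y ∉ zpowers x) :
    Function.Injective (quaternionGroupLift (hx ▸ pow_orderOf_eq_one x) hy hxy) := by
  have hx' : x ^ (2 * n) = 1 := hx ▸ pow_orderOf_eq_one x
  rw [injective_iff_map_eq_one]
  rintro (i | i) hi <;> obtain ⟨k, rfl⟩ := ZMod.intCast_surjective i
  · replace hi : zmodPowersHom x hx' (.ofAdd (k : ZMod (2 * n))) = 1 := hi
    rw [zmodPowersHom_ofAdd_intCast, ← orderOf_dvd_iff_zpow_eq_one, hx,
      ← ZMod.intCast_zmod_eq_zero_iff_dvd] at hi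
    rw [hi, QuaternionGroup.a_zero]
  · replace hi : y * zmodPowersHom x hx' (.ofAdd (k : ZMod (2 * n))) = 1 := hi
    rw [zmodPowersHom_ofAdd_intCast, mul_eq_one_iff_eq_inv] at hi
    exact absurd (hi ▸ inv_mem (zpow_mem (mem_zpowers x) k)) hmem

lemma nonempty_mulEquiv_quaternionGroup {n : ℕ} [NeZero n] (hcard : Nat.card G = 4 * n)
    (hx : orderOf x = 2 * n) (hy : y ^ 2 = x ^ n) (hxy : SemiconjBy y x⁻¹ x)
    (hmem : y ∉ zpowers x) : Nonempty (G ≃* QuaternionGroup n) := by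
  have : Finite G := Nat.finite_of_card_ne_zero (by simp [hcard, NeZero.ne n])
  have hbij := (Nat.bijective_iff_injective_and_card _).2
    ⟨quaternionGroupLift_injective hx hy hxy hmem,
      by rw [hcard, Nat.card_eq_fintype_card, QuaternionGroup.card]⟩
  exact ⟨(MulEquiv.ofBijective _ hbij).symm⟩

end QuaternionLift

section Counting

variable {G : Type*} [Group G]

lemma card_filter_zpowers_eq [Fintype G] [DecidableEq (Subgroup G)] {H : Subgroup G}
    (hH : IsCyclic H) : #{g : G | zpowers g = H} = (Nat.card H).totient := by
  classical
  have := Fintype.ofFinite H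
  rw [← IsCyclic.card_orderOf_eq_totient (α := H) Nat.card_eq_fintype_card.dvd,
    ← card_map (Function.Embedding.subtype (· ∈ H))]
  congr 1
  ext g
  simp only [mem_filter, mem_univ, true_and, mem_map, Function.Embedding.subtype_apply,
    Subtype.exists, Subgroup.orderOf_mk, exists_and_right, exists_eq_right]
  constructor
  · rintro rfl
    exact ⟨mem_zpowers g, (Nat.card_zpowers g).symm⟩
  · rintro ⟨hg, hcard⟩
    exact eq_of_le_of_card_ge (zpowers_le.2 hg) (by rw [Nat.card_zpowers, hcard])

open scoped Classical in
lemma lambdaCover_eq_sum_inv_totient [Fintype G] :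
    (lambdaCover G : ℚ) =
      ∑ g : G with IsMaximalCyclic (zpowers g), ((orderOf g).totient : ℚ)⁻¹ := by
  have hfiber (H : Subgroup G) (hH : IsMaximalCyclic H) :
      ∑ g : G with IsMaximalCyclic (zpowers g) ∧ zpowers g = H,
        ((orderOf g).totient : ℚ)⁻¹ = 1 := by
    have hfilter (g : G) : IsMaximalCyclic (zpowers g) ∧ zpowers g = H ↔ zpowers g = H :=
      and_iff_right_of_imp fun h => h ▸ hH
    have hconst (g : G) (hg : g ∈ ({g : G | zpowers g = H} : Finset G)) :
        ((orderOf g).totient : ℚ)⁻¹ = ((Nat.card H).totient : ℚ)⁻¹ := by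
      rw [← (mem_filter.1 hg).2, Nat.card_zpowers]
    simp only [hfilter]
    rw [sum_congr rfl hconst, sum_const, card_filter_zpowers_eq hH.1, nsmul_eq_mul,
      mul_inv_cancel₀ (by simp)]
  rw [lambdaCover, Nat.card_eq_fintype_card, Fintype.card_subtype,
    ← sum_fiberwise_of_maps_to (g := zpowers) (t := {H : Subgroup G | IsMaximalCyclic H})
      (by simp)]
  simp only [filter_filter]
  rw [sum_congr rfl fun H hH => hfiber H (mem_filter.1 hH).2]
  simp

lemma isMaximalCyclic_zpowers_iff [Finite G] {x : G} :
    IsMaximalCyclic (zpowers x) ↔ ∀ y, x ∈ zpowers y → orderOf x = orderOf y := by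
  constructor
  · intro h y hxy
    rw [← Nat.card_zpowers, h.2 _ inferInstance (zpowers_le.2 hxy), Nat.card_zpowers]
  · refine fun h => ⟨inferInstance, fun K hK hle => ?_⟩
    obtain ⟨y, rfl⟩ := (Subgroup.isCyclic_iff_exists_zpowers_eq_top K).1 hK
    exact eq_of_le_of_card_ge hle
      (by rw [Nat.card_zpowers, Nat.card_zpowers, h y (zpowers_le.1 hle)])

lemma not_isMaximalCyclic_zpowers_one [Finite G] [Nontrivial G] :
    ¬ IsMaximalCyclic (zpowers (1 : G)) := by
  obtain ⟨y, hy⟩ := exists_ne (1 : G)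
  intro h
  have := isMaximalCyclic_zpowers_iff.1 h y (one_mem _)
  exact hy (orderOf_eq_one_iff.1 (by simpa using this.symm))

lemma isMaximalCyclic_zpowers_of_lt_two_mul_orderOf [Finite G] {x : G}
    (h : ∀ y : G, orderOf y < 2 * orderOf x) : IsMaximalCyclic (zpowers x) := by
  refine isMaximalCyclic_zpowers_iff.2 fun y hxy => ?_
  obtain ⟨k, hk⟩ := orderOf_dvd_of_mem_zpowers hxy
  have hypos := orderOf_pos y
  have hk1 : k = 1 := by
    have := h y
    have : k < 2 := by by_contra! hk2; nlinarith
    have : k ≠ 0 := by rintro rfl; omega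
    omega
  rw [hk, hk1, mul_one]

lemma orderOf_eq_four_iff {x : G} : orderOf x = 4 ↔ orderOf (x ^ 2) = 2 := by
  constructor
  · intro hx
    rw [orderOf_pow_of_dvd two_ne_zero (by rw [hx]; norm_num), hx]
  · intro hx
    have hne : x ^ 2 ≠ 1 := fun h => by simp [h] at hx
    exact orderOf_eq_prime_pow (p := 2) (n := 1) (by simpa using hne)
      (by rw [pow_succ, pow_one, pow_mul]; exact orderOf_dvd_iff_pow_eq_one.1 hx.dvd)

lemma pow_eq_of_mem_zpowers_of_orderOf_eq_two {x y : G} {m : ℕ} (hy : orderOf y = 2 * m)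
    (hx : orderOf x = 2) (h : x ∈ zpowers y) : y ^ m = x := by
  obtain ⟨k, rfl⟩ := mem_zpowers_iff.1 h
  have hsq : (y ^ m) ^ (2 : ℤ) = 1 := by
    rw [zpow_ofNat, ← pow_mul, mul_comm, ← hy, pow_orderOf_eq_one]
  have hdvd : (2 * m : ℤ) ∣ 2 * k := by
    have : y ^ (k * 2) = 1 := by
      rw [zpow_mul, zpow_ofNat, ← hx, pow_orderOf_eq_one]
    rw [mul_comm 2 k]
    exact_mod_cast hy ▸ orderOf_dvd_iff_zpow_eq_one.2 this
  obtain ⟨j, rfl⟩ := (mul_dvd_mul_iff_left two_ne_zero).1 hdvd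
  rw [zpow_mul, zpow_natCast] at hx ⊢
  obtain ⟨i, rfl | rfl⟩ := j.even_or_odd'
  · rw [zpow_mul, hsq, one_zpow, orderOf_one] at hx
    omega
  · rw [zpow_add, zpow_mul, hsq, one_zpow, one_mul, zpow_one]

variable [Fintype G] [DecidableEq G]

variable (G) in
/-- The involutions that are squares of elements of order four. When no element has order greater
than four, these are the involutions that do not generate a maximal cyclic subgroup. -/
noncomputable def orderFourSquares : Finset G := ({g : G | orderOf g = 4} : Finset G).image (· ^ 2)

lemma mem_orderFourSquares {x : G} :
    x ∈ orderFourSquares G ↔ orderOf x = 2 ∧ ∃ y, y ^ 2 = x := by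
  simp only [orderFourSquares, mem_image, mem_filter_univ, orderOf_eq_four_iff]
  grind

lemma sq_mem_orderFourSquares {x : G} (hx : orderOf x = 4) : x ^ 2 ∈ orderFourSquares G :=
  mem_orderFourSquares.2 ⟨orderOf_eq_four_iff.1 hx, x, rfl⟩

lemma isMaximalCyclic_zpowers_iff_notMem_orderFourSquares (hle : ∀ g : G, orderOf g ≤ 4) {x : G}
    (hx : orderOf x = 2) : IsMaximalCyclic (zpowers x) ↔ x ∉ orderFourSquares G := by
  rw [isMaximalCyclic_zpowers_iff]
  constructor
  · intro h hmem
    obtain ⟨y, hy, rfl⟩ := mem_image.1 hmem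
    have hy4 : orderOf y = 4 := (mem_filter.1 hy).2
    have heq : orderOf (y ^ 2) = orderOf y := h y (npow_mem_zpowers y 2)
    omega
  · intro hmem y hxy
    by_contra hne
    have hdvd := orderOf_dvd_of_mem_zpowers hxy
    rw [hx] at hne hdvd
    have hy4 : orderOf y = 4 := by
      have := hle y
      have := orderOf_pos y
      omega
    exact hmem (mem_orderFourSquares.2
      ⟨hx, y, pow_eq_of_mem_zpowers_of_orderOf_eq_two hy4 hx hxy⟩)

theorem two_mul_card_eq_two_mul_lambdaCover_add [Nontrivial G] (hle : ∀ g : G, orderOf g ≤ 4) :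
    2 * Nat.card G = 2 * lambdaCover G + 2 + 2 * #(orderFourSquares G) +
      #{g : G | orderOf g = 3} + #{g : G | orderOf g = 4} := by
  classical
  have hweight (g : G) : (2 : ℚ) =
      2 * (if IsMaximalCyclic (zpowers g) then ((orderOf g).totient : ℚ)⁻¹ else 0) +
      2 * (if g = 1 then 1 else 0) + 2 * (if g ∈ orderFourSquares G then 1 else 0) +
      (if orderOf g = 3 then 1 else 0) + (if orderOf g = 4 then 1 else 0) := by
    have hmax (hg : 2 < orderOf g) : IsMaximalCyclic (zpowers g) :=
      isMaximalCyclic_zpowers_of_lt_two_mul_orderOf fun y => (hle y).trans_lt (by omega)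
    have hmem (hg : orderOf g ≠ 2) : g ∉ orderFourSquares G :=
      fun h => hg (mem_orderFourSquares.1 h).1
    have hone (hg : 1 < orderOf g) : g ≠ 1 := by rintro rfl; simp at hg
    have hpos := orderOf_pos g
    have hle4 := hle g
    interval_cases hg : orderOf g
    · obtain rfl := orderOf_eq_one_iff.1 hg
      simp only [not_isMaximalCyclic_zpowers_one]
      simp [hmem]
    · rw [isMaximalCyclic_zpowers_iff_notMem_orderFourSquares hle hg]
      by_cases hS : g ∈ orderFourSquares G <;> simp [hS, hone]
    · norm_num [hmax, hmem, hone, show Nat.totient 3 = 2 from rfl]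
    · norm_num [hmax, hmem, hone, show Nat.totient 4 = 2 from rfl]
  have hsum := sum_congr (rfl : (univ : Finset G) = univ) fun g _ => hweight g
  simp only [sum_add_distrib, ← mul_sum, ← sum_filter, ← lambdaCover_eq_sum_inv_totient,
    sum_const, nsmul_eq_mul, mul_one, filter_eq', mem_univ, if_true, filter_univ_mem,
    card_singleton, Nat.cast_one, card_univ] at hsum
  rw [Nat.card_eq_fintype_card, mul_comm]
  exact_mod_cast hsum

end Counting

section SquaresOfOrderFour

variable {G : Type*} [Group G]

lemma inv_sq_eq_sq_of_orderOf_eq_four {x : G} (hx : orderOf x = 4) : x⁻¹ ^ 2 = x ^ 2 := by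
  rw [inv_pow, inv_eq_iff_mul_eq_one, ← pow_add]
  exact orderOf_dvd_iff_pow_eq_one.1 hx.dvd

lemma ne_inv_of_two_lt_orderOf {x : G} (hx : 2 < orderOf x) : x ≠ x⁻¹ := fun h =>
  hx.not_ge (Nat.le_of_dvd two_pos (orderOf_dvd_of_pow_eq_one
    (by rw [sq, mul_eq_one_iff_eq_inv.2 h])))

variable [Fintype G] [DecidableEq G]

lemma two_le_card_filter_sq_eq_sq {x : G} (hx : orderOf x = 4) :
    2 ≤ #{g : G | g ^ 2 = x ^ 2} := by
  have htwo : #{x, x⁻¹} = 2 := card_pair (ne_inv_of_two_lt_orderOf (by omega))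
  refine htwo.symm.le.trans (card_le_card fun g hg => ?_)
  obtain rfl | rfl := by simpa using hg
  · simp
  · simp [inv_sq_eq_sq_of_orderOf_eq_four hx]

lemma three_le_card_filter_sq_eq_sq {x u : G} (hx : orderOf x = 4) (hu : orderOf u = 2)
    (hxu : Commute x u) (hne : u ≠ x ^ 2) : 3 ≤ #{g : G | g ^ 2 = x ^ 2} := by
  have hu1 : u ≠ 1 := by rintro rfl; simp at hu
  have hu2 : u ^ 2 = 1 := hu ▸ pow_orderOf_eq_one u
  have hthree : #{x, x⁻¹, x * u} = 3 := by
    refine card_eq_three.2 ⟨_, _, _, ne_inv_of_two_lt_orderOf (by omega), by simpa, ?_, rfl⟩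
    intro h
    apply hne
    rw [← inv_sq_eq_sq_of_orderOf_eq_four hx, sq, eq_inv_mul_iff_mul_eq, h]
  refine hthree.symm.le.trans (card_le_card fun g hg => ?_)
  obtain rfl | rfl | rfl := by simpa using hg
  · simp
  · simp [inv_sq_eq_sq_of_orderOf_eq_four hx]
  · simp [hxu.mul_pow, hu2]

lemma card_orderOf_eq_four_eq_sum :
    #{g : G | orderOf g = 4} = ∑ z ∈ orderFourSquares G, #{g : G | g ^ 2 = z} := by
  rw [card_eq_sum_card_image (· ^ 2)]
  refine sum_congr rfl fun z hz => ?_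
  simp only [filter_filter]
  congr! 2 with g
  refine and_iff_right_of_imp ?_
  rintro rfl
  exact orderOf_eq_four_iff.2 (mem_orderFourSquares.1 hz).1

lemma two_mul_card_orderFourSquares_le :
    2 * #(orderFourSquares G) ≤ #{g : G | orderOf g = 4} := by
  rw [card_orderOf_eq_four_eq_sum, mul_comm, ← smul_eq_mul]
  refine card_nsmul_le_sum _ _ _ fun z hz => ?_
  obtain ⟨y, hy, rfl⟩ := mem_image.1 hz
  exact two_le_card_filter_sq_eq_sq (mem_filter.1 hy).2

lemma conj_mem_orderFourSquares {x : G} (g : G) (hx : x ∈ orderFourSquares G) :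
    g * x * g⁻¹ ∈ orderFourSquares G := by
  obtain ⟨hx2, y, rfl⟩ := mem_orderFourSquares.1 hx
  exact mem_orderFourSquares.2
    ⟨((SemiconjBy.conj_mk g _).orderOf_eq g).symm.trans hx2, g * y * g⁻¹, conj_pow⟩

lemma sq_eq_sq_of_orderOf_eq_four
    (hcard : 2 * #(orderFourSquares G) + #{g : G | orderOf g = 4} ≤ 8) {x y : G}
    (hx : orderOf x = 4) (hy : orderOf y = 4) : x ^ 2 = y ^ 2 := by
  by_contra hne
  have hS : orderFourSquares G = {x ^ 2, y ^ 2} := by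
    refine (eq_of_subset_of_card_le ?_ ?_).symm
    · simp [insert_subset_iff, sq_mem_orderFourSquares, hx, hy]
    · have := two_mul_card_orderFourSquares_le (G := G)
      rw [card_pair hne]
      omega
  have hcomm : Commute x (y ^ 2) := by
    have hmem := conj_mem_orderFourSquares x (sq_mem_orderFourSquares hy)
    rw [hS, mem_insert, mem_singleton] at hmem
    refine mul_inv_eq_iff_eq_mul.1 (hmem.resolve_left fun h => hne ?_)
    rw [mul_inv_eq_iff_eq_mul, (Commute.pow_self x 2).eq] at h
    exact (mul_left_cancel h).symm
  have hx3 := three_le_card_filter_sq_eq_sq hx (orderOf_eq_four_iff.1 hy) hcomm (Ne.symm hne)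
  have hy2 := two_le_card_filter_sq_eq_sq hy
  rw [card_orderOf_eq_four_eq_sum, hS, sum_pair hne, card_pair hne] at hcard
  omega

end SquaresOfOrderFour

section CentralSquare

variable {G : Type*} [Group G] {z : G}

lemma sq_eq_one_of_forall_sq (hsq : ∀ g : G, g ^ 2 = 1 ∨ g ^ 2 = z) : z ^ 2 = 1 :=
  (hsq z).elim id fun h => by
    have : z = 1 := by simpa [sq] using h
    simp [this]

lemma mem_centralizer_or_semiconjBy_inv (hz : z ∈ center G)
    (hsq : ∀ g : G, g ^ 2 = 1 ∨ g ^ 2 = z) {x : G} (hx : x ^ 2 = z) (g : G) :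
    g ∈ centralizer {x} ∨ SemiconjBy g x⁻¹ x := by
  have hzz : z * z = 1 := by rw [← sq, sq_eq_one_of_forall_sq hsq]
  have hxinv : x⁻¹ = x * z := by
    rw [inv_eq_iff_mul_eq_one, ← mul_assoc, ← sq, hx, hzz]
  have hdefect : (g * x) ^ 2 = g ^ 2 * x ^ 2 ∨ (g * x) ^ 2 = g ^ 2 * x ^ 2 * z := by
    rcases hsq g with hg | hg <;> rcases hsq (g * x) with hgx | hgx <;> simp [hg, hgx, hx, hzz]
  refine hdefect.imp (fun h => ?_) (fun h => ?_)
  · refine mem_centralizer_singleton_iff.2 (mul_left_cancel (a := g) (mul_right_cancel (b := x) ?_))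
    calc g * (g * x) * x = g ^ 2 * x ^ 2 := by simp only [sq, mul_assoc]
      _ = (g * x) ^ 2 := h.symm
      _ = g * (x * g) * x := by simp only [sq, mul_assoc]
  · have hzx : z * x = x * z := (mem_center_iff.1 hz x).symm
    refine mul_left_cancel (a := g) (mul_right_cancel (b := x) ?_)
    calc g * (g * x⁻¹) * x = g ^ 2 * x ^ 2 * z := by simp only [hxinv, sq, mul_assoc, hzx]
      _ = (g * x) ^ 2 := h.symm
      _ = g * (x * g) * x := by simp only [sq, mul_assoc]

lemma orderOf_eq_four_of_sq_eq (hz1 : z ≠ 1) (hsq : ∀ g : G, g ^ 2 = 1 ∨ g ^ 2 = z) {x : G}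
    (hx : x ^ 2 = z) : orderOf x = 4 :=
  orderOf_eq_four_iff.2 (hx ▸ orderOf_eq_prime (sq_eq_one_of_forall_sq hsq) hz1)

lemma index_centralizer_eq_two (hz : z ∈ center G)
    (hsq : ∀ g : G, g ^ 2 = 1 ∨ g ^ 2 = z) {x v : G} (hx : x ^ 2 = z)
    (hv : v ∉ centralizer {x}) : (centralizer {x}).index = 2 := by
  have hinv (g : G) (hg : g ∉ centralizer {x}) : SemiconjBy g x⁻¹ x :=
    (mem_centralizer_or_semiconjBy_inv hz hsq hx g).resolve_left hg
  rw [index_eq_two_iff]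
  refine ⟨v, fun g => ?_⟩
  by_cases hg : g ∈ centralizer {x}
  · simp [hg, mul_mem_cancel_left, hv]
  · suffices g * v ∈ centralizer {x} by simp [this, hg]
    have := (hinv g hg).mul_left ((SemiconjBy.inv_right_iff.2 (hinv v hv)))
    rw [inv_inv] at this
    exact mem_centralizer_singleton_iff.2 this

variable [Finite G]

lemma card_centralizer_eq_two_mul (hz1 : z ≠ 1) (hsq : ∀ g : G, g ^ 2 = 1 ∨ g ^ 2 = z) {x : G}
    (hx : x ^ 2 = z) :
    Nat.card (centralizer {x}) = 2 * ({g | g ^ 2 = z} ∩ centralizer {x} : Set G).ncard := by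
  have hswap (g : G) : g ∈ ({g | g ^ 2 = z} ∩ centralizer {x} : Set G) ↔
      Equiv.mulLeft x g ∈ (centralizer {x} \ {g | g ^ 2 = z} : Set G) := by
    have hxmem : x ∈ centralizer {x} := mem_centralizer_singleton_iff.2 rfl
    simp only [Equiv.coe_mulLeft, Set.mem_inter_iff, Set.mem_sdiff, SetLike.mem_coe,
      Subgroup.mul_mem_cancel_left _ hxmem, Set.mem_ofPred_eq, and_comm (a := g ^ 2 = z)]
    refine and_congr_right fun hg => ?_
    have hcomm : Commute x g := (mem_centralizer_singleton_iff.1 hg).symm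
    rw [hcomm.mul_pow, hx, mul_eq_left]
    rcases hsq g with h | h <;> simp [h, hz1, hz1.symm]
  have hhalf : ({g | g ^ 2 = z} ∩ centralizer {x} : Set G).ncard =
      (centralizer {x} \ {g | g ^ 2 = z} : Set G).ncard :=
    Nat.card_congr ((Equiv.mulLeft x).subtypeEquiv hswap)
  calc Nat.card (centralizer {x}) = (centralizer {x} : Set G).ncard := rfl
    _ = _ := by
      rw [← Set.ncard_inter_add_ncard_sdiff_eq_ncard _ {g | g ^ 2 = z}, ← hhalf, Set.inter_comm,
        two_mul]

lemma four_le_ncard_sqrt_diff_centralizer (hz : z ∈ center G) (hz1 : z ≠ 1)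
    (hsq : ∀ g : G, g ^ 2 = 1 ∨ g ^ 2 = z) {x v : G} (hx : x ^ 2 = z) (hv : v ^ 2 = z)
    (hxv : v ∉ centralizer {x}) : 4 ≤ ({g | g ^ 2 = z} \ centralizer {x} : Set G).ncard := by
  have hinv := (mem_centralizer_or_semiconjBy_inv hz hsq hx v).resolve_left hxv
  have hcoset : (· * v) '' (zpowers x : Set G) ⊆ {g | g ^ 2 = z} \ centralizer {x} := by
    rintro _ ⟨_, ⟨k, rfl⟩, rfl⟩
    have hk : x ^ k ∈ centralizer {x} :=
      zpow_mem (mem_centralizer_singleton_iff.2 rfl) k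
    refine ⟨?_, by simpa [Subgroup.mul_mem_cancel_left _ hk] using hxv⟩
    have : v * (x ^ k) = x ^ (-k) * v := by simpa using (hinv.zpow_right (-k)).eq
    change (x ^ k * v) ^ 2 = z
    rw [sq, mul_assoc, ← mul_assoc v, this, mul_assoc, ← mul_assoc, ← zpow_add, add_neg_cancel,
      zpow_zero, one_mul, ← sq, hv]
  calc 4 = orderOf x := (orderOf_eq_four_of_sq_eq hz1 hsq hx).symm
    _ = (zpowers x : Set G).ncard := (Nat.card_zpowers x).symm
    _ = ((· * v) '' (zpowers x : Set G)).ncard :=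
      (Set.ncard_image_of_injective _ (mul_left_injective v)).symm
    _ ≤ _ := Set.ncard_le_ncard hcoset

lemma exists_sqrt_notMem_centralizer (hz1 : z ≠ 1) (hsq : ∀ g : G, g ^ 2 = 1 ∨ g ^ 2 = z)
    {x : G} (hx : x ^ 2 = z) (hthree : 3 ∣ {g : G | g ^ 2 = z}.ncard) :
    ∃ v, v ^ 2 = z ∧ v ∉ centralizer {x} := by
  by_contra! hall
  have hdvd : 3 ∣ Nat.card (centralizer {x}) := by
    have hsub : {g : G | g ^ 2 = z} ⊆ centralizer {x} := hall
    rw [card_centralizer_eq_two_mul hz1 hsq hx, Set.inter_eq_left.2 hsub]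
    exact hthree.mul_left 2
  obtain ⟨g, hg⟩ := exists_prime_orderOf_dvd_card' 3 hdvd
  have hfour : (g : G) ^ 4 = 1 := by
    rw [show 4 = 2 * 2 from rfl, pow_mul]
    rcases hsq g with h | h <;> simp [h, sq_eq_one_of_forall_sq hsq]
  have := orderOf_dvd_of_pow_eq_one hfour
  rw [Subgroup.orderOf_coe, hg] at this
  omega

theorem nonempty_mulEquiv_quaternionGroup_two (hz : z ∈ center G) (hz1 : z ≠ 1)
    (hsq : ∀ g : G, g ^ 2 = 1 ∨ g ^ 2 = z) (hsix : {g : G | g ^ 2 = z}.ncard = 6) :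
    Nonempty (G ≃* QuaternionGroup 2) := by
  obtain ⟨x, hx⟩ : {g : G | g ^ 2 = z}.Nonempty := Set.nonempty_of_ncard_ne_zero (by omega)
  replace hx : x ^ 2 = z := hx
  have hx4 := orderOf_eq_four_of_sq_eq hz1 hsq hx
  obtain ⟨v, hv, hxv⟩ := exists_sqrt_notMem_centralizer hz1 hsq hx (by omega)
  have hcard : Nat.card G = 4 * 2 := by
    have hinside : 4 ≤ Nat.card (centralizer {x}) := by
      rw [← hx4, ← Nat.card_zpowers]
      exact card_le_of_le (zpowers_le.2 (mem_centralizer_singleton_iff.2 rfl))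
    have houtside := four_le_ncard_sqrt_diff_centralizer hz hz1 hsq hx hv hxv
    have hsplit :=
      Set.ncard_inter_add_ncard_sdiff_eq_ncard {g : G | g ^ 2 = z} (centralizer {x} : Set G)
    have hhalf := card_centralizer_eq_two_mul hz1 hsq hx
    rw [← (centralizer {x}).card_mul_index, index_centralizer_eq_two hz hsq hx hxv]
    omega
  refine nonempty_mulEquiv_quaternionGroup hcard hx4 (hv.trans hx.symm)
    ((mem_centralizer_or_semiconjBy_inv hz hsq hx v).resolve_left hxv) fun hmem => hxv ?_
  exact zpowers_le.2 (mem_centralizer_singleton_iff.2 rfl) hmem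

end CentralSquare

section UniqueSquare

variable {G : Type*} [Group G]

lemma sq_mem_center_of_forall_orderOf_eq {x : G}
    (hsame : ∀ t : G, orderOf t = orderOf x → t ^ 2 = x ^ 2) : x ^ 2 ∈ center G := by
  refine mem_center_iff.2 fun g => ?_
  have hconj := hsame _ ((SemiconjBy.conj_mk g x).orderOf_eq g).symm
  rwa [conj_pow, mul_inv_eq_iff_eq_mul] at hconj

lemma orderOf_ne_three_of_mem_center (hsix : ∀ g : G, orderOf g ≠ 6) {z : G} (hz : z ∈ center G)
    (hz2 : orderOf z = 2) (g : G) : orderOf g ≠ 3 := by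
  intro hg
  have hcomm : Commute g z := mem_center_iff.1 hz g
  refine hsix (g * z) ?_
  rw [hcomm.orderOf_mul_eq_mul_orderOf_of_coprime (by rw [hz2, hg]; norm_num), hg, hz2]

lemma sq_eq_one_or_orderOf_eq_four [Finite G] {g : G} (hle : orderOf g ≤ 4)
    (hthree : orderOf g ≠ 3) : g ^ 2 = 1 ∨ orderOf g = 4 := by
  have hpos := orderOf_pos g
  have hdvd : orderOf g ∣ 2 ∨ orderOf g = 4 := by
    interval_cases orderOf g <;> simp_all
  exact hdvd.imp_left orderOf_dvd_iff_pow_eq_one.1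

variable [Fintype G] {x : G}

lemma ncard_sqrt_eq_card_orderOf_eq_four (hx : orderOf x = 4)
    (hsame : ∀ t : G, orderOf t = 4 → t ^ 2 = x ^ 2) :
    {g : G | g ^ 2 = x ^ 2}.ncard = #{g : G | orderOf g = 4} := by
  have hiff (g : G) : g ^ 2 = x ^ 2 ↔ orderOf g = 4 :=
    ⟨fun hg => by rwa [orderOf_eq_four_iff, hg, ← orderOf_eq_four_iff], hsame g⟩
  simp only [hiff, ← Set.ncard_coe_finset, coe_filter_univ]

lemma orderFourSquares_eq_singleton [DecidableEq G] (hx : orderOf x = 4)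
    (hsame : ∀ t : G, orderOf t = 4 → t ^ 2 = x ^ 2) : orderFourSquares G = {x ^ 2} := by
  refine eq_singleton_iff_unique_mem.2 ⟨sq_mem_orderFourSquares hx, fun z hz => ?_⟩
  obtain ⟨t, ht, rfl⟩ := mem_image.1 hz
  exact hsame t (mem_filter.1 ht).2

end UniqueSquare

theorem lambda_eq_card_sub_five_max_order_four {G : Type*} [Group G] [Finite G]
    (h : Nat.card G = lambdaCover G + 5)
    (h4 : IsGreatest {n | ∃ g : G, orderOf g = n} 4) :
    Nonempty (G ≃* QuaternionGroup 2) := by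
  classical
  cases nonempty_fintype G
  obtain ⟨⟨x, hx⟩, hub⟩ := h4
  have hle (g : G) : orderOf g ≤ 4 := hub ⟨g, rfl⟩
  have hx2 : orderOf (x ^ 2) = 2 := orderOf_eq_four_iff.1 hx
  have : Nontrivial G := ⟨x, 1, by rintro rfl; simp at hx⟩
  have hcount := two_mul_card_eq_two_mul_lambdaCover_add hle
  have hsame (t : G) (ht : orderOf t = 4) : t ^ 2 = x ^ 2 :=
    sq_eq_sq_of_orderOf_eq_four (by omega) ht hx
  have hcenter : x ^ 2 ∈ center G := sq_mem_center_of_forall_orderOf_eq (hx ▸ hsame)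
  have hthree : ∀ g : G, orderOf g ≠ 3 :=
    orderOf_ne_three_of_mem_center (fun g => ((hle g).trans_lt (by norm_num)).ne) hcenter hx2
  have hsq (g : G) : g ^ 2 = 1 ∨ g ^ 2 = x ^ 2 :=
    (sq_eq_one_or_orderOf_eq_four (hle g) (hthree g)).imp_right (hsame g)
  have hsix : {g : G | g ^ 2 = x ^ 2}.ncard = 6 := by
    rw [filter_false_of_mem fun g _ => hthree g, card_empty, orderFourSquares_eq_singleton hx hsame,
      card_singleton, ← ncard_sqrt_eq_card_orderOf_eq_four hx hsame] at hcount
    omega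
  exact nonempty_mulEquiv_quaternionGroup_two hcenter (fun h1 => by simp [h1] at hx2) hsq hsix
end
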